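/- arXiv:2401.10847 — 2 statements merged into one kernel-verified Lean document; each statement's English description precedes it below -/
import Mathlib

section
/- Let F be a finite graph with at least one edge and let T be a tree such that every graph T+e obtained by adding an edge between two non-adjacent vertices of T, and every graph 2T+e obtained from the disjoint union of two copies of T by adding an edge with one endpoint in each copy, contains a connected component of F that is not contained in T. Then for every residue class C modulo |V(T)| there exists an F-saturated blueprint (H,T) with |V(H)| ∈ C. -/
open SimpleGraph Filter Topology

/-- `H` (on `β`) is contained in `G` (on `α`): `G` has a subgraph isomorphic to `H`. -/
def Contains {α β : Type*} (G : SimpleGraph α) (H : SimpleGraph β) : Prop :=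
  ∃ f : β ↪ α, ∀ a b : β, H.Adj a b → G.Adj (f a) (f b)

/-- `G` is `F`-saturated: `G` does not contain `F`, but adding any missing edge creates `F`. -/
def SatSingle {γ α : Type*} (F : SimpleGraph γ) (G : SimpleGraph α) : Prop :=
  (¬ Contains G F) ∧
    ∀ u v : α, u ≠ v → ¬ G.Adj u v → Contains (G ⊔ SimpleGraph.fromEdgeSet {s(u, v)}) F

/-- The disjoint union of two graphs. -/
def disjUnionG {α β : Type*} (G : SimpleGraph α) (H : SimpleGraph β) : SimpleGraph (α ⊕ β) :=
  SimpleGraph.fromRel (fun x y =>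
    match x, y with
    | Sum.inl a, Sum.inl b => G.Adj a b
    | Sum.inr a, Sum.inr b => H.Adj a b
    | _, _ => False)

/-- `H ∪ kT`: the disjoint union of `H` with `k` copies of `T`. -/
def unionCopies {α β : Type*} (H : SimpleGraph α) (k : ℕ) (T : SimpleGraph β) :
    SimpleGraph (α ⊕ Fin k × β) :=
  SimpleGraph.fromRel (fun x y =>
    match x, y with
    | Sum.inl a, Sum.inl b => H.Adj a b
    | Sum.inr (i, a), Sum.inr (j, b) => i = j ∧ T.Adj a b
    | _, _ => False)

/-- `T` is a tree such that every graph `T+e` (obtained by adding an edge between two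
non-adjacent vertices of `T`) and every graph `2T+e` (obtained from the disjoint union of two
copies of `T` by adding an edge with one endpoint in each copy) contains a connected component of
`F` that is not contained in `T`. -/
def GoodTree {nF : ℕ} (F : SimpleGraph (Fin nF)) (t : ℕ) (T : SimpleGraph (Fin t)) : Prop :=
  T.IsTree ∧
  (∀ u v : Fin t, u ≠ v → ¬ T.Adj u v →
    ∃ c : F.ConnectedComponent, ¬ Contains T (SimpleGraph.induce c.supp F) ∧
      Contains (T ⊔ SimpleGraph.fromEdgeSet {s(u, v)}) (SimpleGraph.induce c.supp F)) ∧
  (∀ u v : Fin t,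
    ∃ c : F.ConnectedComponent, ¬ Contains T (SimpleGraph.induce c.supp F) ∧
      Contains (disjUnionG T T ⊔ SimpleGraph.fromEdgeSet {s(Sum.inl u, Sum.inr v)})
        (SimpleGraph.induce c.supp F))

/-!
Call a component of `F` big if it is not contained in `T`, and let `B` be the union of the big
components. Start from a core `H₀` that does not contain `B` but contains `B` minus any big
component, add infinitely many copies of `T`, and extend to an `F`-saturated graph `G` on the same
vertices by Zorn's lemma. An edge of `G` inside or between the copies would create a big component
there, and the core would accommodate the other ones; so `G` adds no such edge. If, moreover, a
vertex of the core joined to the same vertex of infinitely many copies always creates `F`, then `G`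
touches only finitely many copies. Absorbing these into the core changes its size by a multiple of
`|T|`, and of the untouched copies all but finitely many may be discarded, since every copy of `F`
meets only `|F|` of them.

If some big component is a star, take `|B| - 1` as clique size and let `H₀` be a clique with
isolated vertices: copies hung on an isolated vertex complete the star, and copies hung on a clique
vertex complete a component obtained from a bridge between two copies of `T`. Otherwise let `Z` be
a minimum vertex cover of `B` and let `H₀` be the join of a clique of size `|Z| - 1` with
independent vertices. Here a graph embeds in `H₀` as soon as it has a cover of size less than `|Z|`,
and cutting a bridge of a big component allows part of it to be moved into the copies so that the
cover of the rest shrinks. In both cases the number of isolated or independent vertices is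
arbitrary, which yields every residue class.
-/

section Copies

variable {α α' β γ ι κ : Type*}

/-- The disjoint union of copies of `T` indexed by `ι`. -/
def copies (ι : Type*) (T : SimpleGraph β) : SimpleGraph (ι × β) :=
  (⊥ : SimpleGraph ι) □ T

@[simp]
lemma copies_adj {T : SimpleGraph β} {x y : ι × β} :
    (copies ι T).Adj x y ↔ x.1 = y.1 ∧ T.Adj x.2 y.2 := by
  simp [copies, boxProd_adj, and_comm]

lemma disjUnionG_eq_sum (G : SimpleGraph α) (H : SimpleGraph β) : disjUnionG G H = G ⊕g H := by
  ext (x | x) (y | y) <;> simp [disjUnionG, adj_comm, and_iff_right_of_imp Adj.ne]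

lemma unionCopies_eq_sum (H : SimpleGraph α) (k : ℕ) (T : SimpleGraph β) :
    unionCopies H k T = H ⊕g copies (Fin k) T := by
  ext (x | ⟨i, x⟩) (y | ⟨j, y⟩)
  · simp [unionCopies, adj_comm, and_iff_right_of_imp Adj.ne]
  · simp [unionCopies]
  · simp [unionCopies]
  · simp only [unionCopies, fromRel_adj, SimpleGraph.sum_adj, copies_adj, eq_comm (a := j),
      T.adj_comm y x, or_self, ne_eq, Sum.inr.injEq, Prod.mk.injEq]
    exact and_iff_right_of_imp fun h h' => h.2.ne h'.2

/-- A reindexing of the copies of `T` as an embedding of graphs. -/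
def copiesEmbedding (T : SimpleGraph β) (r : ι ↪ κ) : copies ι T ↪g copies κ T where
  toFun := Prod.map r id
  inj' := r.injective.prodMap Function.injective_id
  map_rel_iff' := by simp

/-- The indices of the copies of `T` that a set of vertices meets. -/
def copyIndices (J : Set (α ⊕ ι × β)) : Set ι :=
  Prod.fst '' (Sum.inr ⁻¹' J)

lemma mem_copyIndices {J : Set (α ⊕ ι × β)} {i : ι} {u : β} (h : Sum.inr (i, u) ∈ J) :
    i ∈ copyIndices J :=
  ⟨(i, u), h, rfl⟩

lemma finite_copyIndices {J : Set (α ⊕ ι × β)} (hJ : J.Finite) : (copyIndices J).Finite :=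
  (hJ.preimage Sum.inr_injective.injOn).image _

lemma ncard_copyIndices_le {J : Set (α ⊕ ι × β)} (hJ : J.Finite) :
    (copyIndices J).ncard ≤ J.ncard :=
  (Set.ncard_image_le (hJ.preimage Sum.inr_injective.injOn)).trans <|
    Set.ncard_le_ncard_of_injOn Sum.inr (fun _ h => h) Sum.inr_injective.injOn hJ

/-- `f` restricts to an embedding of the subgraph of `F` induced on `s` as a (not necessarily
induced) subgraph of `G`. Taking `f` to be defined on all of `γ` makes it easy to restrict to
smaller sets and to glue. -/
def IsCopyOn (F : SimpleGraph γ) (s : Set γ) (G : SimpleGraph α) (f : γ → α) : Prop :=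
  Set.InjOn f s ∧ ∀ a ∈ s, ∀ b ∈ s, F.Adj a b → G.Adj (f a) (f b)

variable {F : SimpleGraph γ} {G : SimpleGraph α} {s s' D : Set γ} {f g : γ → α}

namespace IsCopyOn

lemma mono (hf : IsCopyOn F s G f) (hs : s' ⊆ s) : IsCopyOn F s' G f :=
  ⟨hf.1.mono hs, fun a ha b hb => hf.2 a (hs ha) b (hs hb)⟩

lemma comp {G' : SimpleGraph α'} {φ : α → α'} (hf : IsCopyOn F s G f)
    (hφ : Function.Injective φ) (hG : G ≤ G'.comap φ) : IsCopyOn F s G' (φ ∘ f) :=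
  ⟨hφ.comp_injOn hf.1, fun a ha b hb hab => hG (hf.2 a ha b hb hab)⟩

lemma piecewise [DecidablePred (· ∈ D)] (hf : IsCopyOn F (s ∩ D) G f)
    (hg : IsCopyOn F (s \ D) G g) (hne : ∀ a ∈ s ∩ D, ∀ b ∈ s \ D, f a ≠ g b)
    (hadj : ∀ a ∈ s ∩ D, ∀ b ∈ s \ D, F.Adj a b → G.Adj (f a) (g b)) :
    IsCopyOn F s G (D.piecewise f g) := by
  constructor
  · intro a ha b hb hab
    by_cases haD : a ∈ D <;> by_cases hbD : b ∈ D <;> simp only [haD, hbD, not_false_eq_true,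
      Set.piecewise_eq_of_mem, Set.piecewise_eq_of_notMem] at hab
    · exact hf.1 ⟨ha, haD⟩ ⟨hb, hbD⟩ hab
    · exact (hne a ⟨ha, haD⟩ b ⟨hb, hbD⟩ hab).elim
    · exact (hne b ⟨hb, hbD⟩ a ⟨ha, haD⟩ hab.symm).elim
    · exact hg.1 ⟨ha, haD⟩ ⟨hb, hbD⟩ hab
  · intro a ha b hb hab
    by_cases haD : a ∈ D <;> by_cases hbD : b ∈ D <;> simp only [haD, hbD, not_false_eq_true,
      Set.piecewise_eq_of_mem, Set.piecewise_eq_of_notMem]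
    · exact hf.2 a ⟨ha, haD⟩ b ⟨hb, hbD⟩ hab
    · exact hadj a ⟨ha, haD⟩ b ⟨hb, hbD⟩ hab
    · exact (hadj b ⟨hb, hbD⟩ a ⟨ha, haD⟩ hab.symm).symm
    · exact hg.2 a ⟨ha, haD⟩ b ⟨hb, hbD⟩ hab

end IsCopyOn

lemma contains_iff_exists_isCopyOn_univ : Contains G F ↔ ∃ f, IsCopyOn F Set.univ G f :=
  ⟨fun ⟨f, hf⟩ => ⟨f, f.injective.injOn, fun a _ b _ => hf a b⟩,
    fun ⟨f, hf⟩ => ⟨⟨f, Set.injOn_univ.1 hf.1⟩, fun a b => hf.2 a trivial b trivial⟩⟩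

lemma contains_induce_iff_exists_isCopyOn [Nonempty α] :
    Contains G (F.induce s) ↔ ∃ f, IsCopyOn F s G f := by
  constructor
  · rintro ⟨f, hf⟩
    let f' : γ → α := Function.extend (↑) f fun _ => Classical.arbitrary α
    have hf' (x : s) : f' x = f x := Subtype.val_injective.extend_apply f _ x
    refine ⟨f', fun a ha b hb hab => ?_, fun a ha b hb hab => ?_⟩
    · rw [hf' ⟨a, ha⟩, hf' ⟨b, hb⟩] at hab
      exact congrArg Subtype.val (f.injective hab)
    · rw [hf' ⟨a, ha⟩, hf' ⟨b, hb⟩]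
      exact hf _ _ hab
  · rintro ⟨f, hf⟩
    exact ⟨⟨s.domRestrict f, hf.1.injective⟩, fun a b => hf.2 a a.2 b b.2⟩

end Copies

section BigComponents

variable {α β γ ι : Type*} {F : SimpleGraph γ} {T : SimpleGraph β} {c : F.ConnectedComponent}

lemma exists_adj_mem_notMem_of_mem_supp {P : Set γ} {a b : γ} (ha : a ∈ c.supp)
    (hb : b ∈ c.supp) (haP : a ∈ P) (hbP : b ∉ P) :
    ∃ x ∈ c.supp, ∃ y ∈ c.supp, F.Adj x y ∧ x ∈ P ∧ y ∉ P := by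
  classical
  obtain ⟨w⟩ := c.reachable_of_mem_supp ha hb
  obtain ⟨d, hd, hdP, hdP'⟩ := w.exists_boundary_dart P haP hbP
  have hfst : d.fst ∈ c.supp := by
    have hreach : F.Reachable d.fst a :=
      (w.takeUntil d.fst (w.dart_fst_mem_support_of_mem_darts hd)).reachable.symm
    exact (ConnectedComponent.sound hreach).trans ha
  exact ⟨d.fst, hfst, d.snd, c.mem_supp_of_adj_mem_supp hfst d.adj, d.adj, hdP, hdP'⟩

/-- A connected component of `F` is big if it is not contained in `T`. These are the components
for which the copies of `T` alone do not provide room. -/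
def IsBig (T : SimpleGraph β) (c : F.ConnectedComponent) : Prop :=
  ¬ Contains T (F.induce c.supp)

/-- The vertices of `F` lying in big components. -/
def bigVerts (F : SimpleGraph γ) (T : SimpleGraph β) : Set γ :=
  {v | IsBig T (F.connectedComponentMk v)}

lemma IsBig.supp_subset_bigVerts (hc : IsBig T c) : c.supp ⊆ bigVerts F T := by
  rintro v rfl
  exact hc

lemma mem_bigVerts_iff_of_adj {v w : γ} (h : F.Adj v w) :
    v ∈ bigVerts F T ↔ w ∈ bigVerts F T := by
  simp only [bigVerts, Set.mem_ofPred_eq, ConnectedComponent.connectedComponentMk_eq_of_adj h]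

lemma exists_adj_of_mem_bigVerts [Nonempty β] {v : γ} (hv : v ∈ bigVerts F T) :
    ∃ w ∈ bigVerts F T, F.Adj v w := by
  by_contra! h
  have hsupp : (F.connectedComponentMk v).supp.Subsingleton := by
    have key (x) (hx : x ∈ (F.connectedComponentMk v).supp) : x = v := by
      by_contra hxv
      obtain ⟨y, -, z, -, hyz, rfl, -⟩ := exists_adj_mem_notMem_of_mem_supp (P := {v})
        ConnectedComponent.connectedComponentMk_mem hx rfl hxv
      exact h z ((mem_bigVerts_iff_of_adj hyz).1 hv) hyz
    exact fun x hx y hy => (key x hx).trans (key y hy).symm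
  exact hv <| contains_induce_iff_exists_isCopyOn.2 ⟨fun _ => Classical.arbitrary β,
    hsupp.injOn _, fun a ha b hb hab => (hab.ne (hsupp ha hb)).elim⟩

lemma IsBig.exists_eq_inl (hc : IsBig T c) {H : SimpleGraph α} {f : γ → α ⊕ ι × β}
    (hf : IsCopyOn F c.supp (H ⊕g copies ι T) f) : ∀ v ∈ c.supp, ∃ a, f v = Sum.inl a := by
  intro v hv
  rcases hfv : f v with a | ⟨i, u⟩
  · exact ⟨a, rfl⟩
  have hright : ∀ x ∈ c.supp, ∃ w, f x = Sum.inr (i, w) := by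
    by_contra! h
    obtain ⟨x, hx, hfx⟩ := h
    obtain ⟨y, hy, z, hz, hyz, ⟨w, hw⟩, hzP⟩ := exists_adj_mem_notMem_of_mem_supp
      (P := {x | ∃ w, f x = Sum.inr (i, w)}) hv hx ⟨u, hfv⟩ fun ⟨w, hw⟩ => hfx w hw
    have hadj := hf.2 y hy z hz hyz
    rcases hfz : f z with b | ⟨j, b⟩ <;> rw [hw, hfz] at hadj
    · simp at hadj
    · obtain ⟨rfl, -⟩ := copies_adj.1 (sum_adj_inr.1 hadj)
      exact hzP ⟨b, hfz⟩
  have : Nonempty β := ⟨u⟩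
  choose! g hg using hright
  refine (hc <| contains_induce_iff_exists_isCopyOn.2 ⟨g, fun a ha b hb hab => ?_,
    fun a ha b hb hab => ?_⟩).elim
  · exact hf.1 ha hb (by rw [hg a ha, hg b hb, hab])
  · have hadj := hf.2 a ha b hb hab
    rw [hg a ha, hg b hb, sum_adj_inr, copies_adj] at hadj
    exact hadj.2

lemma IsCopyOn.exists_isCopyOn_left [Nonempty α] {H : SimpleGraph α} {f : γ → α ⊕ ι × β}
    (hf : IsCopyOn F (bigVerts F T) (H ⊕g copies ι T) f) :
    ∃ ψ, IsCopyOn F (bigVerts F T) H ψ := by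
  have hleft : ∀ v ∈ bigVerts F T, ∃ a, f v = Sum.inl a := fun v hv =>
    IsBig.exists_eq_inl hv (hf.mono (IsBig.supp_subset_bigVerts hv)) v
      ConnectedComponent.connectedComponentMk_mem
  choose! ψ hψ using hleft
  refine ⟨ψ, fun a ha b hb hab => ?_, fun a ha b hb hab => ?_⟩
  · exact hf.1 ha hb (by rw [hψ a ha, hψ b hb, hab])
  · have hadj := hf.2 a ha b hb hab
    rwa [hψ a ha, hψ b hb, sum_adj_inl] at hadj

lemma exists_isCopyOn_compl_bigVerts [Nonempty β] :
    ∃ ψ, IsCopyOn F (bigVerts F T)ᶜ (copies F.ConnectedComponent T) ψ := by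
  have hsmall (c : F.ConnectedComponent) : ∃ e : γ → β, ¬ IsBig T c → IsCopyOn F c.supp T e := by
    by_cases hc : IsBig T c
    · exact ⟨fun _ => Classical.arbitrary β, fun h => (h hc).elim⟩
    · obtain ⟨e, he⟩ := contains_induce_iff_exists_isCopyOn.1 (not_not.1 hc)
      exact ⟨e, fun _ => he⟩
  choose e he using hsmall
  refine ⟨fun x => (F.connectedComponentMk x, e (F.connectedComponentMk x) x),
    fun x hx y _ hxy => ?_, fun x hx y _ hxy => ?_⟩
  · obtain ⟨hc, hxy⟩ := Prod.mk.inj hxy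
    rw [← hc] at hxy
    exact (he _ hx).1 ConnectedComponent.connectedComponentMk_mem hc.symm hxy
  · have hc := ConnectedComponent.connectedComponentMk_eq_of_adj hxy
    refine copies_adj.2 ⟨hc, ?_⟩
    simp only [← hc]
    exact (he _ hx).2 x ConnectedComponent.connectedComponentMk_mem y hc.symm hxy

variable [Finite γ] [Infinite ι] [Nonempty β] {G : SimpleGraph (α ⊕ ι × β)}

lemma contains_of_isCopyOn_bigVerts (hG : copies ι T ≤ G.comap Sum.inr) {φ : γ → α ⊕ ι × β}
    (hφ : IsCopyOn F (bigVerts F T) G φ) : Contains G F := by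
  classical
  let free : Set ι := (copyIndices (Set.range φ))ᶜ
  have : Infinite free :=
    (finite_copyIndices (Set.finite_range φ)).infinite_compl.to_subtype
  have : Finite F.ConnectedComponent := Quot.finite _
  obtain ⟨j⟩ := nonempty_embedding_nat F.ConnectedComponent
  let r : F.ConnectedComponent ↪ ι :=
    (j.trans (Infinite.natEmbedding free)).trans (Function.Embedding.subtype _)
  have hr (c) : r c ∉ copyIndices (Set.range φ) := (Infinite.natEmbedding free (j c)).2
  obtain ⟨ψ, hψ⟩ := exists_isCopyOn_compl_bigVerts (F := F) (T := T)
  have hψ' : IsCopyOn F (bigVerts F T)ᶜ G (Sum.inr ∘ copiesEmbedding T r ∘ ψ) :=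
    (hψ.comp (copiesEmbedding T r).injective fun _ _ => (copiesEmbedding T r).map_rel_iff.2).comp
      Sum.inr_injective hG
  refine contains_iff_exists_isCopyOn_univ.2 ⟨_, IsCopyOn.piecewise (D := bigVerts F T)
    (hφ.mono Set.inter_subset_right) (hψ'.mono fun x hx => hx.2) ?_ ?_⟩
  · intro a _ b _ hab
    exact hr (ψ b).1 (mem_copyIndices ⟨a, hab⟩)
  · intro a ha b hb hab
    exact (hb.2 ((mem_bigVerts_iff_of_adj hab).1 ha.2)).elim

lemma contains_of_core_and_copies {H₀ : SimpleGraph α} (hG : H₀ ⊕g copies ι T ≤ G) {D : Set γ}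
    {g : γ → ι × β} {ψ : γ → α} (hg : IsCopyOn F D (G.comap Sum.inr) g)
    (hψ : IsCopyOn F (bigVerts F T \ D) H₀ ψ)
    (hcross : ∀ d ∈ D, ∀ y ∈ bigVerts F T \ D, F.Adj d y → G.Adj (Sum.inr (g d)) (Sum.inl (ψ y))) :
    Contains G F := by
  classical
  refine contains_of_isCopyOn_bigVerts (fun x y hxy => hG (sum_adj_inr.2 hxy))
    (IsCopyOn.piecewise (D := D) ((hg.comp Sum.inr_injective le_rfl).mono Set.inter_subset_right)
      (hψ.comp Sum.inl_injective fun x y hxy => hG (sum_adj_inl.2 hxy)) ?_ ?_)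
  · simp
  · exact fun d hd y hy => hcross d hd.2 y hy

end BigComponents

section Saturation

variable {α α' β γ ι κ V W : Type*} {F : SimpleGraph γ} {T : SimpleGraph β}

lemma SatSingle.of_embeddings [Finite γ] {G : SimpleGraph V} {G' : SimpleGraph W}
    (hG : SatSingle F G) (Φ₀ : G' ↪g G)
    (h : ∀ u v : W, ∀ J : Set V, J.Finite → J.ncard ≤ Nat.card γ →
      ∃ Φ : G' ↪g G, Φ u = Φ₀ u ∧ Φ v = Φ₀ v ∧ J ⊆ Set.range Φ) : SatSingle F G' := by
  refine ⟨fun ⟨f, hf⟩ => hG.1 ⟨f.trans Φ₀.toEmbedding,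
    fun a b hab => Φ₀.map_rel_iff.2 (hf a b hab)⟩, fun u v huv hadj => ?_⟩
  obtain ⟨f, hf⟩ := hG.2 (Φ₀ u) (Φ₀ v) (Φ₀.injective.ne huv) (Φ₀.map_rel_iff.not.2 hadj)
  obtain ⟨Φ, hu, hv, hΦ⟩ := h u v (Set.range f) (Set.finite_range f)
    ((Set.ncard_range_of_injective f.injective).le)
  choose g hg using fun x => hΦ ⟨x, rfl⟩
  refine ⟨⟨g, fun a b hab => f.injective (by rw [← hg a, ← hg b, hab])⟩, fun a b hab => ?_⟩
  have hab' := hf a b hab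
  rw [← hg a, ← hg b, ← hu, ← hv] at hab'
  change (G' ⊔ fromEdgeSet {s(u, v)}).Adj (g a) (g b)
  simpa [Sym2.eq_iff, Φ.injective.eq_iff] using hab'

lemma SatSingle.congr [Finite γ] {G : SimpleGraph V} {G' : SimpleGraph W} (hG : SatSingle F G)
    (e : G' ≃g G) : SatSingle F G' :=
  hG.of_embeddings e.toEmbedding fun _ _ _ _ _ =>
    ⟨e.toEmbedding, rfl, rfl, fun x _ => e.surjective x⟩

lemma exists_satSingle_ge [Finite γ] {G₀ : SimpleGraph V} (h : ¬ Contains G₀ F) :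
    ∃ G, G₀ ≤ G ∧ SatSingle F G := by
  have hchain : ∀ C ⊆ {G : SimpleGraph V | ¬ Contains G F}, IsChain (· ≤ ·) C → ∀ G₁ ∈ C,
      ∃ ub ∈ {G : SimpleGraph V | ¬ Contains G F}, ∀ G ∈ C, G ≤ ub := by
    refine fun C hC hchain G₁ hG₁ => ⟨sSup C, fun ⟨f, hf⟩ => ?_, fun G hG => le_sSup hG⟩
    have : Nonempty C := ⟨⟨G₁, hG₁⟩⟩
    have hmem (e : {e : γ × γ // F.Adj e.1 e.2}) :
        ∃ G : C, G.1.Adj (f e.1.1) (f e.1.2) := by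
      obtain ⟨G, hG, hadj⟩ := sSup_adj.1 (hf _ _ e.2)
      exact ⟨⟨G, hG⟩, hadj⟩
    choose g hg using hmem
    obtain ⟨G, hle⟩ := hchain.directedOn.directed_val.finite_le g
    exact hC G.2 ⟨f, fun a b hab => hle ⟨(a, b), hab⟩ (hg ⟨(a, b), hab⟩)⟩
  obtain ⟨G, hle, hG⟩ := zorn_le_nonempty₀ _ hchain G₀ h
  refine ⟨G, hle, hG.prop, fun u v huv hadj => ?_⟩
  by_contra hfree
  exact hadj (hG.le_of_ge hfree le_sup_left (by simp [huv]))

lemma exists_embedding_eqOn_subset_range [Finite ι] [Infinite κ] (ρ : ι ↪ κ) {s : Set ι}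
    {J : Set κ} (hJ : J.Finite) (h : s.ncard + J.ncard ≤ Nat.card ι) :
    ∃ r : ι ↪ κ, Set.EqOn r ρ s ∧ J ⊆ Set.range r := by
  classical
  have := Fintype.ofFinite ι
  lift s to Finset ι using s.toFinite
  lift J to Finset κ using hJ
  rw [Set.ncard_coe_finset, Set.ncard_coe_finset, Nat.card_eq_fintype_card] at h
  obtain ⟨t, ht, htcard⟩ := Infinite.exists_superset_card_eq (s.image ρ ∪ J) (Fintype.card ι)
    ((Finset.card_union_le _ _).trans ((Nat.add_le_add_right Finset.card_image_le _).trans h))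
  obtain ⟨r, hr⟩ := Finset.exists_equiv_extend_of_card_eq htcard.symm
    (Finset.union_subset_left ht) ρ.injective.injOn
  exact ⟨r.toEmbedding.trans (Function.Embedding.subtype _), hr,
    fun j hj => ⟨r.symm ⟨j, Finset.union_subset_right ht hj⟩, by simp⟩⟩

lemma SatSingle.sum_copies_of_infinite [Finite γ] [Finite ι] [Infinite κ] {H : SimpleGraph α}
    {H' : SimpleGraph α'} (hH : SatSingle F (H ⊕g copies κ T)) (e : H' ≃g H)
    (hι : Nat.card γ + 2 ≤ Nat.card ι) : SatSingle F (H' ⊕g copies ι T) := by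
  let Φ (r : ι ↪ κ) : H' ⊕g copies ι T ↪g H ⊕g copies κ T :=
    Embedding.sum e.toEmbedding (copiesEmbedding T r)
  obtain ⟨j⟩ := nonempty_embedding_nat ι
  let ρ : ι ↪ κ := j.trans (Infinite.natEmbedding κ)
  refine hH.of_embeddings (Φ ρ) fun u v J hJ hJcard => ?_
  have hindices : (copyIndices {u, v}).ncard ≤ 2 :=
    (ncard_copyIndices_le (Set.toFinite _)).trans ((Set.ncard_insert_le u {v}).trans (by simp))
  obtain ⟨r, hrρ, hJr⟩ := exists_embedding_eqOn_subset_range ρ (s := copyIndices {u, v})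
    (finite_copyIndices hJ) (by have := ncard_copyIndices_le hJ; omega)
  have hΦ : ∀ x ∈ ({u, v} : Set _), Φ r x = Φ ρ x := by
    rintro (x | ⟨i, x⟩) hx
    · rfl
    · exact congrArg (fun k => Sum.inr (k, x)) (hrρ (mem_copyIndices hx))
  refine ⟨Φ r, hΦ u (Set.mem_insert _ _), hΦ v (Set.mem_insert_of_mem _ rfl), ?_⟩
  rintro (x | ⟨i, x⟩) hx
  · exact ⟨Sum.inl (e.symm x), congrArg Sum.inl (e.apply_symm_apply x)⟩
  · obtain ⟨k, rfl⟩ := hJr (mem_copyIndices hx)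
    exact ⟨Sum.inr (k, x), rfl⟩

/-- `(H, T)` is an `F`-saturated blueprint: `H` together with `k` copies of `T` is `F`-saturated
for all sufficiently large `k`. -/
def IsSaturatedBlueprint (F : SimpleGraph γ) (H : SimpleGraph α) (T : SimpleGraph β) : Prop :=
  ∃ K : ℕ, ∀ k : ℕ, K ≤ k → SatSingle F (unionCopies H k T)

lemma SatSingle.isSaturatedBlueprint [Finite γ] [Infinite κ] {H : SimpleGraph α}
    {H' : SimpleGraph α'} (hH : SatSingle F (H ⊕g copies κ T)) (e : H' ≃g H) :
    IsSaturatedBlueprint F H' T := by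
  refine ⟨Nat.card γ + 2, fun k hk => ?_⟩
  rw [unionCopies_eq_sum]
  exact hH.sum_copies_of_infinite e (by rwa [Nat.card_fin])

/-- Regroups the copies with index in `S` together with the core. -/
noncomputable def absorbEquiv (α β : Type*) (S : Set ι) :
    (α ⊕ S × β) ⊕ ↥Sᶜ × β ≃ α ⊕ ι × β := by
  classical
  exact (Equiv.sumAssoc _ _ _).trans <| (Equiv.refl α).sumCongr <|
    (Equiv.sumProdDistrib _ _ _).symm.trans <| (Equiv.Set.sumCompl S).prodCongr (Equiv.refl β)

lemma comap_absorbEquiv {G : SimpleGraph (α ⊕ ι × β)} (hcopies : G.comap Sum.inr = copies ι T)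
    {S : Set ι} (hS : ∀ v i u, G.Adj (Sum.inl v) (Sum.inr (i, u)) → i ∈ S) :
    G.comap (absorbEquiv α β S) =
      G.comap (absorbEquiv α β S ∘ Sum.inl) ⊕g copies ↥Sᶜ T := by
  have hcopies' (x y : ι × β) : G.Adj (Sum.inr x) (Sum.inr y) ↔ x.1 = y.1 ∧ T.Adj x.2 y.2 := by
    rw [← copies_adj, ← hcopies, comap_adj]
  have hne (i : S) (j : ↥Sᶜ) : (i : ι) ≠ j := fun h => j.2 (h ▸ i.2)
  have hne' (i : S) (j : ↥Sᶜ) : (j : ι) ≠ i := (hne i j).symm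
  have hfree (v : α) (j : ↥Sᶜ) (u : β) : ¬ G.Adj (Sum.inl v) (Sum.inr (↑j, u)) :=
    fun h => j.2 (hS v j u h)
  have hfree' (v : α) (j : ↥Sᶜ) (u : β) : ¬ G.Adj (Sum.inr (↑j, u)) (Sum.inl v) :=
    fun h => hfree v j u h.symm
  ext ((v | ⟨i, x⟩) | ⟨i, x⟩) ((w | ⟨j, y⟩) | ⟨j, y⟩) <;>
    simp [absorbEquiv, hcopies', hfree, hfree', hne, hne', Subtype.coe_inj]

lemma exists_isSaturatedBlueprint_of_untouched [Finite α] [Finite β] [Finite γ] [Infinite ι]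
    {G : SimpleGraph (α ⊕ ι × β)} (hG : SatSingle F G) (hcopies : G.comap Sum.inr = copies ι T)
    (hcross : {i | ∃ v u, G.Adj (Sum.inl v) (Sum.inr (i, u))}.Finite) :
    ∃ (n : ℕ) (H : SimpleGraph (Fin n)), n ≡ Nat.card α [MOD Nat.card β] ∧
      IsSaturatedBlueprint F H T := by
  let S : Set ι := {i | ∃ v u, G.Adj (Sum.inl v) (Sum.inr (i, u))}
  have : Finite S := hcross.to_subtype
  have : Infinite ↥Sᶜ := hcross.infinite_compl.to_subtype
  have hsat := hG.congr (Iso.comap (absorbEquiv α β S) G)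
  rw [comap_absorbEquiv hcopies (S := S) fun v i u h => ⟨v, u, h⟩] at hsat
  have := Fintype.ofFinite (α ⊕ S × β)
  refine ⟨_, _, ?_, hsat.isSaturatedBlueprint (overFinIso _ rfl).symm⟩
  rw [← Nat.card_eq_fintype_card, Nat.card_sum, Nat.card_prod]
  exact Nat.add_mul_modulus_modEq_iff.2 rfl

end Saturation

section Core

variable {α β γ ι : Type*} {F : SimpleGraph γ} {T : SimpleGraph β} {H₀ : SimpleGraph α}

/-- Every new edge inside a copy of `T` or between two copies of `T` creates a big component
of `F`. -/
structure ForcesBig (F : SimpleGraph γ) (T : SimpleGraph β) : Prop where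
  exists_of_not_adj : ∀ u v, u ≠ v → ¬ T.Adj u v →
    ∃ c : F.ConnectedComponent, IsBig T c ∧ Contains (T ⊔ edge u v) (F.induce c.supp)
  exists_of_bridge : ∀ u v, ∃ c : F.ConnectedComponent, IsBig T c ∧
    Contains ((T ⊕g T) ⊔ edge (Sum.inl u) (Sum.inr v)) (F.induce c.supp)

/-- Once the vertex `v` of the core `H₀` is joined to the vertex `u` of sufficiently many copies
of `T`, there is room for the big components of `F`: a part `D` goes into the copies, the rest into
the core, and all edges in between run from `u` to `v`. As `D` has at most as many vertices as `F`,
copies of `T` indexed by `γ` suffice. -/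
def CanHang (F : SimpleGraph γ) (T : SimpleGraph β) (H₀ : SimpleGraph α) (v : α) (u : β) : Prop :=
  ∃ (D : Set γ) (g : γ → γ × β) (ψ : γ → α), IsCopyOn F D (copies γ T) g ∧
    IsCopyOn F (bigVerts F T \ D) H₀ ψ ∧
    ∀ d ∈ D, ∀ y ∈ bigVerts F T \ D, F.Adj d y → ψ y = v ∧ (g d).2 = u

variable [Finite γ] [Nonempty β]

section Infinite

variable [Infinite ι] {G : SimpleGraph (α ⊕ ι × β)}

lemma contains_of_isCopyOn_supp {c : F.ConnectedComponent}
    (hrest : ∃ ψ, IsCopyOn F (bigVerts F T \ c.supp) H₀ ψ) (hG : H₀ ⊕g copies ι T ≤ G)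
    {g : γ → ι × β} (hg : IsCopyOn F c.supp (G.comap Sum.inr) g) : Contains G F := by
  obtain ⟨ψ, hψ⟩ := hrest
  exact contains_of_core_and_copies hG hg hψ fun d hd y hy hdy =>
    (hy.2 (c.mem_supp_of_adj_mem_supp hd hdy)).elim

lemma ForcesBig.contains_of_adj (hT : ForcesBig F T)
    (hrest : ∀ c : F.ConnectedComponent, IsBig T c → ∃ ψ, IsCopyOn F (bigVerts F T \ c.supp) H₀ ψ)
    (hG : H₀ ⊕g copies ι T ≤ G) {x y : ι × β} (hxy : G.Adj (Sum.inr x) (Sum.inr y))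
    (hne : ¬ (copies ι T).Adj x y) : Contains G F := by
  obtain ⟨i, u⟩ := x
  obtain ⟨j, v⟩ := y
  have hcopy {k a b} (hab : T.Adj a b) : G.Adj (Sum.inr (k, a)) (Sum.inr (k, b)) :=
    hG (sum_adj_inr.2 (copies_adj.2 ⟨rfl, hab⟩))
  by_cases hij : i = j
  · subst hij
    have huv : u ≠ v := fun h => hxy.ne (by rw [h])
    obtain ⟨c, hc, hcT⟩ := hT.exists_of_not_adj u v huv fun h => hne (copies_adj.2 ⟨rfl, h⟩)
    obtain ⟨h, hh⟩ := contains_induce_iff_exists_isCopyOn.1 hcT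
    have hle : T ⊔ edge u v ≤ (G.comap Sum.inr).comap (Prod.mk i) :=
      sup_le (fun a b => hcopy) ((edge_le_iff _).2 (Or.inr hxy))
    exact contains_of_isCopyOn_supp (hrest c hc) hG
      (hh.comp (Prod.mk_right_injective i) hle)
  · obtain ⟨c, hc, hcT⟩ := hT.exists_of_bridge u v
    obtain ⟨h, hh⟩ := contains_induce_iff_exists_isCopyOn.1 hcT
    have hle : (T ⊕g T) ⊔ edge (Sum.inl u) (Sum.inr v) ≤
        (G.comap Sum.inr).comap (Sum.elim (Prod.mk i) (Prod.mk j)) := by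
      refine sup_le ?_ ((edge_le_iff _).2 (Or.inr hxy))
      rintro (a | a) (b | b) hab
      · exact hcopy (sum_adj_inl.1 hab)
      · simp at hab
      · simp at hab
      · exact hcopy (sum_adj_inr.1 hab)
    have hinj : Function.Injective (Sum.elim (Prod.mk i) (Prod.mk j) : β ⊕ β → ι × β) :=
      (Prod.mk_right_injective i).sumElim (Prod.mk_right_injective j)
        fun _ _ h => hij (congrArg Prod.fst h)
    exact contains_of_isCopyOn_supp (hrest c hc) hG (hh.comp hinj hle)

lemma CanHang.contains {v : α} {u : β} (h : CanHang F T H₀ v u) (hG : H₀ ⊕g copies ι T ≤ G)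
    (hinf : {i | G.Adj (Sum.inl v) (Sum.inr (i, u))}.Infinite) : Contains G F := by
  obtain ⟨D, g, ψ, hg, hψ, hcross⟩ := h
  obtain ⟨j⟩ := nonempty_embedding_nat γ
  let r : γ ↪ ι := (j.trans (hinf.natEmbedding _)).trans (Function.Embedding.subtype _)
  have hr (x) : G.Adj (Sum.inl v) (Sum.inr (r x, u)) := (hinf.natEmbedding _ (j x)).2
  have hle : copies γ T ≤ (G.comap Sum.inr).comap (copiesEmbedding T r) := fun x y hxy =>
    hG (sum_adj_inr.2 ((copiesEmbedding T r).map_rel_iff.2 hxy))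
  refine contains_of_core_and_copies hG (hg.comp (copiesEmbedding T r).injective hle) hψ
    fun d hd y hy hdy => ?_
  obtain ⟨hy, hd⟩ := hcross d hd y hy hdy
  have := (hr (g d).1).symm
  rwa [← hd, ← hy] at this

end Infinite

theorem exists_isSaturatedBlueprint_of_core [Finite α] [Finite β]
    (hT : ForcesBig F T) (hfree : ∀ ψ, ¬ IsCopyOn F (bigVerts F T) H₀ ψ)
    (hrest : ∀ c : F.ConnectedComponent, IsBig T c → ∃ ψ, IsCopyOn F (bigVerts F T \ c.supp) H₀ ψ)
    (hhang : ∀ v u, CanHang F T H₀ v u) :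
    ∃ (n : ℕ) (H : SimpleGraph (Fin n)), n ≡ Nat.card α [MOD Nat.card β] ∧
      IsSaturatedBlueprint F H T := by
  have : Nonempty α := by
    obtain ⟨c, hc, -⟩ := hT.exists_of_bridge (Classical.arbitrary β) (Classical.arbitrary β)
    obtain ⟨ψ, -⟩ := hrest c hc
    exact ⟨ψ c.nonempty_supp.some⟩
  have hfree₀ : ¬ Contains (H₀ ⊕g copies ℕ T) F := fun h => by
    obtain ⟨f, hf⟩ := contains_iff_exists_isCopyOn_univ.1 h
    obtain ⟨ψ, hψ⟩ := (hf.mono (Set.subset_univ _)).exists_isCopyOn_left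
    exact hfree ψ hψ
  obtain ⟨G, hle, hG⟩ := exists_satSingle_ge hfree₀
  have hcopies : G.comap Sum.inr = copies ℕ T := by
    refine le_antisymm (fun x y hxy => ?_) fun x y hxy => hle (sum_adj_inr.2 hxy)
    by_contra hne
    exact hG.1 (hT.contains_of_adj hrest hle hxy hne)
  refine exists_isSaturatedBlueprint_of_untouched hG hcopies ?_
  simp only [Set.ofPred_exists]
  exact Set.finite_iUnion fun v => Set.finite_iUnion fun u =>
    Set.not_infinite.1 fun hinf => hG.1 ((hhang v u).contains hle hinf)

end Core

section Splits

variable {α β γ : Type*} {F : SimpleGraph γ} {T : SimpleGraph β} {c : F.ConnectedComponent}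

/-- `D` embeds in `T` in such a way that all edges of `F` leaving `D` join a vertex placed at `u`
to the vertex `x₀`. Such a `D` can be moved to a copy of `T` whose vertex `u` is joined to the
image of `x₀`. -/
def IsPendant (F : SimpleGraph γ) (T : SimpleGraph β) (x₀ : γ) (u : β) (D : Set γ) : Prop :=
  ∃ h, IsCopyOn F D T h ∧ ∀ d ∈ D, ∀ y ∉ D, F.Adj d y → y = x₀ ∧ h d = u

lemma IsPendant.canHang {H₀ : SimpleGraph α} {x₀ : γ} {u : β} {D : Set γ} {ψ : γ → α}
    (hD : IsPendant F T x₀ u D) (hψ : IsCopyOn F (bigVerts F T \ D) H₀ ψ) :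
    CanHang F T H₀ (ψ x₀) u := by
  obtain ⟨h, hh, hcross⟩ := hD
  refine ⟨D, fun d => (x₀, h d), ψ, ?_, hψ, fun d hd y hy hdy => ?_⟩
  · exact hh.comp (Prod.mk_right_injective x₀) fun a b hab => copies_adj.2 ⟨rfl, hab⟩
  · obtain ⟨rfl, hu⟩ := hcross d hd y hy.2 hdy
    exact ⟨rfl, hu⟩

/-- Removing the edge `ab` splits the component `c` of `F` into `D₁ ∋ a` and `D₂ ∋ b`, which embed
in `T` with `a` placed at `u` and `b` placed at `v`. -/
structure IsSplit (F : SimpleGraph γ) (T : SimpleGraph β) (c : F.ConnectedComponent) (u v : β)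
    (D₁ D₂ : Set γ) (a b : γ) : Prop where
  union_eq : D₁ ∪ D₂ = c.supp
  disjoint : Disjoint D₁ D₂
  left_mem : a ∈ D₁
  right_mem : b ∈ D₂
  adj : F.Adj a b
  left_isPendant : IsPendant F T b u D₁
  right_isPendant : IsPendant F T a v D₂

namespace IsCopyOn

variable {s : Set γ} {u v : β} {f : γ → β ⊕ β}

lemma swap (hf : IsCopyOn F s ((T ⊕g T) ⊔ edge (Sum.inl u) (Sum.inr v)) f) :
    IsCopyOn F s ((T ⊕g T) ⊔ edge (Sum.inl v) (Sum.inr u)) (Sum.swap ∘ f) := by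
  refine hf.comp (Equiv.sumComm β β).injective fun x y hxy => ?_
  rcases x with x | x <;> rcases y with y | y <;> simpa [edge_adj, and_comm] using hxy

lemma isLeft (hf : IsCopyOn F s ((T ⊕g T) ⊔ edge (Sum.inl u) (Sum.inr v)) f) :
    IsCopyOn F {x ∈ s | (f x).isLeft} T (Sum.elim id (fun _ => u) ∘ f) := by
  refine ⟨fun x hx y hy hxy => ?_, fun x hx y hy hxy => ?_⟩ <;>
    obtain ⟨p, hp⟩ := Sum.isLeft_iff.1 hx.2 <;> obtain ⟨q, hq⟩ := Sum.isLeft_iff.1 hy.2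
  · refine hf.1 hx.1 hy.1 ?_
    rw [hp, hq]
    simpa [hp, hq] using hxy
  · simpa [hp, hq, edge_adj] using hf.2 x hx.1 y hy.1 hxy

lemma isPendant_isLeft {b : γ}
    (hf : IsCopyOn F c.supp ((T ⊕g T) ⊔ edge (Sum.inl u) (Sum.inr v)) f) (hb : b ∈ c.supp)
    (hfb : f b = Sum.inr v) : IsPendant F T b u {x ∈ c.supp | (f x).isLeft} := by
  refine ⟨_, hf.isLeft, fun x hx y hy hxy => ?_⟩
  have hyc := c.mem_supp_of_adj_mem_supp hx.1 hxy
  obtain ⟨p, hp⟩ := Sum.isLeft_iff.1 hx.2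
  obtain ⟨q, hq⟩ := Sum.isRight_iff.1 (Sum.not_isLeft.1 fun h => hy ⟨hyc, h⟩)
  obtain ⟨rfl, rfl⟩ : p = u ∧ q = v := by
    simpa [hp, hq, edge_adj] using hf.2 x hx.1 y hyc hxy
  exact ⟨hf.1 hyc hb (hq.trans hfb.symm), by simp [hp]⟩

end IsCopyOn

lemma exists_isSplit (hc : IsBig T c) {u v : β}
    (h : Contains ((T ⊕g T) ⊔ edge (Sum.inl u) (Sum.inr v)) (F.induce c.supp)) :
    ∃ D₁ D₂ a b, IsSplit F T c u v D₁ D₂ a b := by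
  have : Nonempty β := ⟨u⟩
  obtain ⟨f, hf⟩ := contains_induce_iff_exists_isCopyOn.1 h
  have hbig {h s} (hs : IsCopyOn F s T h) : ∃ x ∈ c.supp, x ∉ s := by
    by_contra! hcs
    exact hc (contains_induce_iff_exists_isCopyOn.2 ⟨h, hs.mono hcs⟩)
  obtain ⟨y, hy, hyleft⟩ := hbig hf.isLeft
  obtain ⟨x, hx, hxright⟩ := hbig hf.swap.isLeft
  obtain ⟨a, ha, b, hb, hab, haleft, hbleft⟩ := exists_adj_mem_notMem_of_mem_supp
    (P := {x | (f x).isLeft}) hx hy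
    (by by_contra hxleft; exact hxright ⟨hx, by simpa using hxleft⟩) fun h => hyleft ⟨hy, h⟩
  obtain ⟨p, hp⟩ := Sum.isLeft_iff.1 haleft
  obtain ⟨q, hq⟩ := Sum.isRight_iff.1 (Sum.not_isLeft.1 hbleft)
  obtain ⟨rfl, rfl⟩ : p = u ∧ q = v := by simpa [hp, hq, edge_adj] using hf.2 a ha b hb hab
  refine ⟨{x ∈ c.supp | (f x).isLeft}, {x ∈ c.supp | (f x).swap.isLeft}, a, b, ?_, ?_, ⟨ha, haleft⟩,
    ⟨hb, by simp [hq]⟩, hab, hf.isPendant_isLeft hb hq, hf.swap.isPendant_isLeft ha (by simp [hp])⟩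
  · ext x
    cases hfx : f x <;> simp [hfx]
  · rw [Set.disjoint_left]
    rintro x ⟨-, hxleft⟩ ⟨-, hxright⟩
    cases hfx : f x <;> simp_all

namespace IsSplit

variable {u v : β} {D₁ D₂ : Set γ} {a b : γ}

lemma symm (h : IsSplit F T c u v D₁ D₂ a b) : IsSplit F T c v u D₂ D₁ b a where
  union_eq := by rw [Set.union_comm, h.union_eq]
  disjoint := h.disjoint.symm
  left_mem := h.right_mem
  right_mem := h.left_mem
  adj := h.adj.symm
  left_isPendant := h.right_isPendant
  right_isPendant := h.left_isPendant

lemma right_subset (h : IsSplit F T c u v D₁ D₂ a b) : D₂ ⊆ c.supp :=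
  h.union_eq ▸ Set.subset_union_right

lemma left_notMem (h : IsSplit F T c u v D₁ D₂ a b) : a ∉ D₂ :=
  h.disjoint.notMem_of_mem_left h.left_mem

lemma mem_left_of_adj (h : IsSplit F T c u v D₁ D₂ a b) {y : γ} (hay : F.Adj a y)
    (hy : y ∉ D₂) : y ∈ D₁ := by
  have ha : a ∈ c.supp := h.symm.right_subset h.left_mem
  have hyc : y ∈ D₁ ∪ D₂ := h.union_eq ▸ c.mem_supp_of_adj_mem_supp ha hay
  exact hyc.resolve_right hy

lemma eq_of_adj_of_notMem_left (h : IsSplit F T c u v D₁ D₂ a b) {x y : γ} (hx : x ∈ D₁)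
    (hy : y ∉ D₁) (hxy : F.Adj x y) : y = b := by
  obtain ⟨_, _, hcross⟩ := h.left_isPendant
  exact (hcross x hx y hy hxy).1

lemma exists_injOn_adj (h : IsSplit F T c u v D₁ D₂ a b) :
    ∃ e : γ → β, Set.InjOn e D₁ ∧ ∀ y ∈ D₁, F.Adj a y → T.Adj u (e y) := by
  obtain ⟨e, he, hcross⟩ := h.left_isPendant
  have hea : e a = u := (hcross a h.left_mem b h.symm.left_notMem h.adj).2
  exact ⟨e, he.1, fun y hy hay => hea ▸ he.2 a h.left_mem y hy hay⟩

end IsSplit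

end Splits

section Covers

variable {β γ : Type*} {F : SimpleGraph γ} {T : SimpleGraph β} {c : F.ConnectedComponent}
  {s s' Z Z' D₁ D₂ : Set γ} {u v : β} {a b x : γ}

/-- `Z` is a vertex cover of the subgraph of `F` induced on `s`. -/
def CoversOn (F : SimpleGraph γ) (s Z : Set γ) : Prop :=
  ∀ a ∈ s, ∀ b ∈ s, F.Adj a b → a ∈ Z ∨ b ∈ Z

namespace CoversOn

lemma mono (hZ : CoversOn F s Z) (hs : s' ⊆ s) (hZZ' : Z ⊆ Z') : CoversOn F s' Z' :=
  fun a ha b hb hab => (hZ a (hs ha) b (hs hb) hab).imp (@hZZ' a) (@hZZ' b)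

lemma sdiff (hZ : CoversOn F s Z) (D : Set γ) : CoversOn F (s \ D) (Z \ D) :=
  fun a ha b hb hab => (hZ a ha.1 b hb.1 hab).imp (⟨·, ha.2⟩) (⟨·, hb.2⟩)

lemma of_sdiff_singleton_subset (hZ : CoversOn F s Z) (hZZ' : Z \ {x} ⊆ Z')
    (hx : ∀ y ∈ s, F.Adj x y → y ∈ Z') : CoversOn F s Z' := by
  intro y hy z hz hyz
  by_cases hyx : y = x
  · exact Or.inr (hx z hz (hyx ▸ hyz))
  by_cases hzx : z = x
  · exact Or.inl (hx y hy (hzx ▸ hyz.symm))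
  exact (hZ y hy z hz hyz).imp (fun h => hZZ' ⟨h, hyx⟩) fun h => hZZ' ⟨h, hzx⟩

lemma exists_singleton_of_subsingleton (hZ : CoversOn F s Z) (h : (Z ∩ s).Subsingleton)
    (hs : s.Nonempty) : ∃ z ∈ s, CoversOn F s {z} := by
  obtain ⟨z, hz, hZz⟩ : ∃ z ∈ s, Z ∩ s ⊆ {z} := by
    rcases h.eq_empty_or_singleton with h | ⟨z, hz⟩
    · exact ⟨hs.some, hs.some_mem, by simp [h]⟩
    · exact ⟨z, (hz ▸ Set.mem_singleton z : z ∈ Z ∩ s).2, hz.subset⟩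
  exact ⟨z, hz, fun a ha b hb hab =>
    (hZ a ha b hb hab).imp (fun h => hZz ⟨h, ha⟩) fun h => hZz ⟨h, hb⟩⟩

end CoversOn

lemma IsSplit.exists_nontrivial_inter (hs : IsSplit F T c u u D₁ D₂ a b) (hab : a ∈ Z ∨ b ∈ Z)
    (hnt : (Z ∩ c.supp).Nontrivial) :
    ∃ D₁ D₂ a b, IsSplit F T c u u D₁ D₂ a b ∧ (Z ∩ insert a D₂).Nontrivial := by
  have of_mem {D₁ D₂ a b} (hs : IsSplit F T c u u D₁ D₂ a b) (ha : a ∈ Z) :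
      ∃ D₁ D₂ a b, IsSplit F T c u u D₁ D₂ a b ∧ (Z ∩ insert a D₂).Nontrivial := by
    by_cases hZD : ∃ z ∈ Z, z ∈ D₂
    · obtain ⟨z, hz, hzD⟩ := hZD
      exact ⟨D₁, D₂, a, b, hs, a, ⟨ha, Or.inl rfl⟩, z, ⟨hz, Or.inr hzD⟩,
        fun h => hs.left_notMem (h ▸ hzD)⟩
    · push Not at hZD
      refine ⟨D₂, D₁, b, a, hs.symm, hnt.mono fun z hz => ⟨hz.1, Or.inr ?_⟩⟩
      have hz' : z ∈ D₁ ∪ D₂ := hs.union_eq ▸ hz.2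
      exact hz'.resolve_right (hZD z hz.1)
  exact hab.elim (of_mem hs) (of_mem hs.symm)

lemma IsSplit.isPendant_pair {a' : γ} {w : β} (hs : IsSplit F T c u v D₁ D₂ a b)
    (ha : ∀ y ∈ D₁, F.Adj a y → y = a') (hb : ∀ y ∈ D₂, ¬ F.Adj b y) {l : β} (hw : T.Adj l w) :
    IsPendant F T a' l {a, b} := by
  classical
  have hba : b ≠ a := hs.adj.ne'
  refine ⟨fun x => if x = a then l else w, ⟨?_, ?_⟩, ?_⟩
  · rintro x (rfl | rfl) y (rfl | rfl) <;> simp [hba, hw.ne, hw.ne']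
  · rintro x (rfl | rfl) y (rfl | rfl) <;> simp [hba, hw, hw.symm]
  · rintro d (rfl | rfl) y hy hdy <;> simp only [Set.mem_insert_iff, Set.mem_singleton_iff,
      not_or] at hy
    · refine ⟨ha y ?_ hdy, if_pos rfl⟩
      by_contra hy₁
      exact hy.2 (hs.eq_of_adj_of_notMem_left hs.left_mem hy₁ hdy)
    · exact (hy.1 (hs.symm.eq_of_adj_of_notMem_left hs.right_mem (hb y · hdy) hdy)).elim

variable [Finite γ]

lemma ncard_insert_sdiff_lt {D : Set γ} (h : (Z ∩ D).Nontrivial) :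
    (insert x (Z \ D)).ncard < Z.ncard := by
  have hinter := Set.one_lt_ncard_iff_nontrivial.2 h
  have hsum := Set.ncard_inter_add_ncard_sdiff_eq_ncard Z D
  have hinsert := Set.ncard_insert_le x (Z \ D)
  omega

/-- The case of a core vertex in the cover. One half of the split component and the opposite end of
the bridge together contain two cover vertices; that end alone replaces both. -/
lemma exists_isPendant_mem_cover (hT : ForcesBig F T) (hZ : CoversOn F (bigVerts F T) Z)
    (hnt : ∀ c : F.ConnectedComponent, IsBig T c → (Z ∩ c.supp).Nontrivial) (u : β) :
    ∃ D x₀ Z', IsPendant F T x₀ u D ∧ CoversOn F (bigVerts F T \ D) Z' ∧ Z'.ncard < Z.ncard ∧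
      x₀ ∈ Z' := by
  obtain ⟨c, hc, hcT⟩ := hT.exists_of_bridge u u
  obtain ⟨D₁, D₂, a, b, hs⟩ := exists_isSplit hc hcT
  have hab := hZ a (hc.supp_subset_bigVerts (hs.symm.right_subset hs.left_mem)) b
    (hc.supp_subset_bigVerts (hs.right_subset hs.right_mem)) hs.adj
  obtain ⟨D₁, D₂, a, b, hs, hinter⟩ := hs.exists_nontrivial_inter hab (hnt c hc)
  refine ⟨D₂, a, insert a (Z \ insert a D₂), hs.right_isPendant, ?_, ncard_insert_sdiff_lt hinter,
    Set.mem_insert _ _⟩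
  exact (hZ.sdiff D₂).mono le_rfl fun x hx => by
    by_cases hxa : x = a <;> simp_all

/-- The case of a core vertex outside the cover. The bridge used here ends in a vertex `l` of
degree at most one, so that the end `a` of the split has at most one neighbour in its half. -/
lemma exists_isPendant_notMem_cover (hT : ForcesBig F T) (hZ : CoversOn F (bigVerts F T) Z)
    {l u : β} (hl : (T.neighborSet l).Subsingleton)
    (hlu : (T.neighborSet l).Nonempty → (T.neighborSet u).Nonempty) :
    ∃ D x₀ Z', IsPendant F T x₀ u D ∧ CoversOn F (bigVerts F T \ D) Z' ∧ Z'.ncard < Z.ncard ∧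
      x₀ ∉ Z' := by
  obtain ⟨c, hc, hcT⟩ := hT.exists_of_bridge l u
  obtain ⟨D₁, D₂, a, b, hs⟩ := exists_isSplit hc hcT
  have hbB := hc.supp_subset_bigVerts (hs.right_subset hs.right_mem)
  have haB := hc.supp_subset_bigVerts (hs.symm.right_subset hs.left_mem)
  have hab := hZ a haB b hbB hs.adj
  obtain ⟨e, he, heT⟩ := hs.exists_injOn_adj
  by_cases ha : a ∉ Z
  · refine ⟨D₂, a, Z \ D₂, hs.right_isPendant, hZ.sdiff D₂, ?_, fun h => ha h.1⟩
    exact Set.ncard_lt_ncard (Set.sdiff_ssubset_left_iff.2 ⟨b, hab.resolve_left ha, hs.right_mem⟩)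
  rw [not_not] at ha
  by_cases hN : ∀ y ∈ D₁, F.Adj a y → y ∈ Z
  · refine ⟨D₂, a, Z \ {a}, hs.right_isPendant, ?_, Set.ncard_sdiff_singleton_lt_of_mem ha,
      fun h => h.2 rfl⟩
    exact (hZ.mono Set.sdiff_subset le_rfl).of_sdiff_singleton_subset le_rfl fun y hy hay =>
      ⟨hN y (hs.mem_left_of_adj hay hy.2) hay, hay.ne'⟩
  push Not at hN
  obtain ⟨a', ha', haa', ha'Z⟩ := hN
  have huniq (y) (hy : y ∈ D₁) (hay : F.Adj a y) : y = a' :=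
    he hy ha' (hl (heT y hy hay) (heT a' ha' haa'))
  by_cases hZD : ∃ z ∈ Z, z ∈ D₂
  · obtain ⟨z, hz, hzD⟩ := hZD
    refine ⟨D₂, a, insert a' (Z \ insert a D₂), hs.right_isPendant, ?_, ncard_insert_sdiff_lt
      ⟨a, ⟨ha, Or.inl rfl⟩, z, ⟨hz, Or.inr hzD⟩, fun h => hs.left_notMem (h ▸ hzD)⟩, ?_⟩
    · refine (hZ.sdiff D₂).of_sdiff_singleton_subset (x := a) ?_ fun y hy hay =>
        Or.inl (huniq y (hs.mem_left_of_adj hay hy.2) hay)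
      rintro y ⟨⟨hy, hyD⟩, hya⟩
      exact Or.inr ⟨hy, by simp_all⟩
    · simp [haa'.ne]
  · push Not at hZD
    have hb (y) (hy : y ∈ D₂) (hby : F.Adj b y) : False :=
      (hZ b hbB y (hc.supp_subset_bigVerts (hs.right_subset hy)) hby).elim
        (hZD b · hs.right_mem) (hZD y · hy)
    obtain ⟨w, hw⟩ := hlu ⟨e a', heT a' ha' haa'⟩
    refine ⟨{a, b}, a', Z \ {a}, hs.isPendant_pair huniq hb hw, ?_,
      Set.ncard_sdiff_singleton_lt_of_mem ha, fun h => ha'Z h.1⟩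
    exact (hZ.sdiff {a, b}).mono le_rfl (Set.sdiff_subset_sdiff_right (by simp))

end Covers

section Constructions

variable {β γ : Type*} {F : SimpleGraph γ} {T : SimpleGraph β} {s Z : Set γ} {p m : ℕ}
  {v : Fin p ⊕ Fin m} {x₀ : γ}

/-- A complete graph on `p` vertices together with `m` isolated vertices. -/
def cliqueCore (p m : ℕ) : SimpleGraph (Fin p ⊕ Fin m) :=
  ⊤ ⊕g ⊥

/-- The join of a complete graph on `p` vertices with `m` independent vertices. -/
def joinCore (p m : ℕ) : SimpleGraph (Fin p ⊕ Fin m) :=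
  (⊥ ⊕g ⊤)ᶜ

lemma cliqueCore_adj {x y : Fin p ⊕ Fin m} :
    (cliqueCore p m).Adj x y ↔ x ≠ y ∧ x.isLeft ∧ y.isLeft := by
  rcases x with x | x <;> rcases y with y | y <;> simp [cliqueCore]

lemma joinCore_adj {x y : Fin p ⊕ Fin m} :
    (joinCore p m).Adj x y ↔ x ≠ y ∧ (x.isLeft ∨ y.isLeft) := by
  rcases x with x | x <;> rcases y with y | y <;> simp [joinCore]

lemma exists_embedding_isLeft_iff [Finite γ] (hp : Z.ncard ≤ p) (hm : Nat.card γ ≤ m) :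
    ∃ ψ : γ ↪ Fin p ⊕ Fin m, ∀ x, (ψ x).isLeft ↔ x ∈ Z := by
  classical
  have := Fintype.ofFinite γ
  obtain ⟨f⟩ : Nonempty (Z ↪ Fin p) := Function.Embedding.nonempty_of_card_le (by
    rwa [Fintype.card_fin, ← Nat.card_eq_fintype_card, Nat.card_coe_set_eq])
  obtain ⟨g⟩ : Nonempty (γ ↪ Fin m) := Function.Embedding.nonempty_of_card_le (by
    rwa [Fintype.card_fin, ← Nat.card_eq_fintype_card])
  refine ⟨(Equiv.Set.sumCompl Z).symm.toEmbedding.trans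
    (f.sumMap ((Function.Embedding.subtype _).trans g)), fun x => ?_⟩
  by_cases hx : x ∈ Z <;> simp [hx, Equiv.Set.sumCompl_symm_apply_of_mem,
    Equiv.Set.sumCompl_symm_apply_of_notMem]

lemma exists_embedding_isLeft_iff_apply_eq [Finite γ] (hp : Z.ncard ≤ p) (hm : Nat.card γ ≤ m)
    (hv : v.isLeft ↔ x₀ ∈ Z) :
    ∃ ψ : γ ↪ Fin p ⊕ Fin m, ψ x₀ = v ∧ ∀ x, (ψ x).isLeft ↔ x ∈ Z := by
  classical
  obtain ⟨ψ, hψ⟩ := exists_embedding_isLeft_iff hp hm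
  have hv' : v.isLeft = (ψ x₀).isLeft := Bool.eq_iff_iff.2 (hv.trans (hψ x₀).symm)
  refine ⟨ψ.trans (Equiv.swap (ψ x₀) v).toEmbedding, by simp, fun x => ?_⟩
  rw [← hψ x, Function.Embedding.trans_apply, Equiv.coe_toEmbedding, Equiv.swap_apply_def]
  split_ifs with h₁ h₂
  · rw [h₁, hv']
  · rw [h₂, hv']
  · rfl

lemma isCopyOn_cliqueCore {ψ : γ ↪ Fin p ⊕ Fin m} (hψ : ∀ x, (ψ x).isLeft ↔ x ∈ Z)
    (hZ : ∀ a ∈ s, ∀ b ∈ s, F.Adj a b → a ∈ Z) : IsCopyOn F s (cliqueCore p m) ψ :=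
  ⟨ψ.injective.injOn, fun a ha b hb hab => cliqueCore_adj.2
    ⟨ψ.injective.ne hab.ne, (hψ a).2 (hZ a ha b hb hab), (hψ b).2 (hZ b hb a ha hab.symm)⟩⟩

lemma isCopyOn_joinCore {ψ : γ ↪ Fin p ⊕ Fin m} (hψ : ∀ x, (ψ x).isLeft ↔ x ∈ Z)
    (hZ : CoversOn F s Z) : IsCopyOn F s (joinCore p m) ψ :=
  ⟨ψ.injective.injOn, fun a ha b hb hab => joinCore_adj.2
    ⟨ψ.injective.ne hab.ne, (hZ a ha b hb hab).imp (hψ a).2 (hψ b).2⟩⟩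

lemma ncard_setOf_isLeft_le {f : γ → Fin p ⊕ Fin m} (hf : Set.InjOn f s) :
    {x ∈ s | (f x).isLeft}.ncard ≤ p := by
  refine (Set.ncard_le_ncard_of_injOn (t := Set.range Sum.inl) f (fun x hx => ?_)
    (hf.mono (Set.sep_subset s _)) (Set.finite_range _)).trans ?_
  · obtain ⟨a, ha⟩ := Sum.isLeft_iff.1 hx.2
    exact ⟨a, ha.symm⟩
  · rw [Set.ncard_range_of_injective Sum.inl_injective, Nat.card_fin]

lemma exists_ge_add_modEq (p n r : ℕ) {t : ℕ} (ht : t ≠ 0) :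
    ∃ m, n ≤ m ∧ p + m ≡ r [MOD t] := by
  obtain ⟨k, rfl⟩ := Nat.exists_eq_succ_of_ne_zero ht
  refine ⟨r + k * p + (k + 1) * n, by lia, ?_⟩
  rw [show p + (r + k * p + (k + 1) * n) = r + (k + 1) * (p + n) by ring]
  exact Nat.add_modulus_mul_modEq_iff.2 rfl

lemma not_isCopyOn_cliqueCore [Finite γ] [Nonempty β] (hp : p < (bigVerts F T).ncard)
    (f : γ → Fin p ⊕ Fin m) : ¬ IsCopyOn F (bigVerts F T) (cliqueCore p m) f := by
  intro hf
  have hleft : bigVerts F T ⊆ {x ∈ bigVerts F T | (f x).isLeft} := fun x hx => by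
    obtain ⟨y, hy, hxy⟩ := exists_adj_of_mem_bigVerts hx
    exact ⟨hx, (cliqueCore_adj.1 (hf.2 x hx y hy hxy)).2.1⟩
  have := (Set.ncard_le_ncard hleft).trans (ncard_setOf_isLeft_le hf.1)
  omega

lemma not_isCopyOn_joinCore (hp : ∀ Z, CoversOn F s Z → p < Z.ncard) (f : γ → Fin p ⊕ Fin m) :
    ¬ IsCopyOn F s (joinCore p m) f := by
  intro hf
  refine (hp _ fun a ha b hb hab => ?_).not_ge (ncard_setOf_isLeft_le hf.1)
  exact (joinCore_adj.1 (hf.2 a ha b hb hab)).2.imp (⟨ha, ·⟩) (⟨hb, ·⟩)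

lemma CoversOn.canHang_of_singleton {α : Type*} {H₀ : SimpleGraph α} {c : F.ConnectedComponent}
    {z : γ} {ψ : γ → α} (hz : CoversOn F c.supp {z})
    (hψ : IsCopyOn F (bigVerts F T \ (c.supp \ {z})) H₀ ψ) (u : β) :
    CanHang F T H₀ (ψ z) u := by
  refine ⟨c.supp \ {z}, fun x => (x, u), ψ, ⟨(Prod.mk_left_injective u).injOn, ?_⟩, hψ, ?_⟩
  · intro a ha b hb hab
    exact ((hz a ha.1 b hb.1 hab).elim ha.2 hb.2).elim
  · intro d hd y hy hdy
    have hyc := c.mem_supp_of_adj_mem_supp hd.1 hdy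
    exact ⟨by_contra fun hyz => hy.2 ⟨hyc, fun h => hyz (h ▸ rfl)⟩, rfl⟩

lemma ncard_sdiff_le [Finite γ] {D : Set γ} {b : γ} (hbs : b ∈ s) (hbD : b ∈ D)
    (hs : s.ncard ≤ p + 1) : (s \ D).ncard ≤ p :=
  Nat.le_of_lt_succ <| (Set.ncard_lt_ncard (Set.sdiff_ssubset_left_iff.2 ⟨b, hbs, hbD⟩)).trans_le hs

lemma exists_subsingleton_neighborSet_of_isTree [Finite β] (hT : T.IsTree) :
    ∃ l, (T.neighborSet l).Subsingleton := by
  have := Fintype.ofFinite β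
  classical
  rcases subsingleton_or_nontrivial β with hβ | hβ
  · obtain ⟨l⟩ := hT.connected.nonempty
    exact ⟨l, Set.subsingleton_of_subsingleton⟩
  · obtain ⟨l, hl⟩ := hT.exists_vert_degree_one_of_nontrivial
    obtain ⟨w, -, hw⟩ := (degree_eq_one_iff_existsUnique_adj).1 hl
    exact ⟨l, fun x hx y hy => (hw x hx).trans (hw y hy).symm⟩

lemma exists_subsingleton_neighborSet_and_nonempty (h : ∃ l, (T.neighborSet l).Subsingleton) :
    ∃ l, (T.neighborSet l).Subsingleton ∧
      ((T.neighborSet l).Nonempty → ∀ u, (T.neighborSet u).Nonempty) := by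
  by_cases hiso : ∃ l, T.neighborSet l = ∅
  · obtain ⟨l, hl⟩ := hiso
    exact ⟨l, by simp [hl], by simp [hl]⟩
  · push Not at hiso
    obtain ⟨l, hl⟩ := h
    exact ⟨l, hl, fun _ => hiso⟩

lemma canHang_cliqueCore [Finite γ] (hT : ForcesBig F T) {c : F.ConnectedComponent}
    (hc : IsBig T c) {z : γ} (hz : z ∈ c.supp) (hcz : CoversOn F c.supp {z})
    (hp : (bigVerts F T).ncard ≤ p + 1) (hm : Nat.card γ ≤ m) (v : Fin p ⊕ Fin m) (u : β) :
    CanHang F T (cliqueCore p m) v u := by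
  rcases v with v | w
  · obtain ⟨c', hc', hcT⟩ := hT.exists_of_bridge u u
    obtain ⟨D₁, D₂, a, b, hs⟩ := exists_isSplit hc' hcT
    have haB := hc'.supp_subset_bigVerts (hs.symm.right_subset hs.left_mem)
    have hbB := hc'.supp_subset_bigVerts (hs.right_subset hs.right_mem)
    obtain ⟨ψ, hψa, hψ⟩ := exists_embedding_isLeft_iff_apply_eq (v := Sum.inl v)
      (ncard_sdiff_le hbB hs.right_mem hp) hm (iff_of_true rfl ⟨haB, hs.left_notMem⟩)
    rw [← hψa]
    exact hs.right_isPendant.canHang (isCopyOn_cliqueCore hψ fun a ha _ _ _ => ha)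
  · obtain ⟨ψ, hψz, hψ⟩ := exists_embedding_isLeft_iff_apply_eq (v := Sum.inr w)
      (ncard_sdiff_le (hc.supp_subset_bigVerts hz) hz hp) hm
      (iff_of_false (by simp) fun h => h.2 hz)
    rw [← hψz]
    refine hcz.canHang_of_singleton (isCopyOn_cliqueCore hψ fun a ha b hb hab => ?_) u
    refine ⟨ha.1, fun hac => hab.ne ?_⟩
    have haz : a = z := by_contra fun h => ha.2 ⟨hac, h⟩
    have hbz : b = z := by_contra fun h => hb.2 ⟨c.mem_supp_of_adj_mem_supp hac hab, h⟩
    rw [haz, hbz]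

lemma canHang_joinCore [Finite γ] (hT : ForcesBig F T) (hZ : CoversOn F (bigVerts F T) Z)
    (hnt : ∀ c : F.ConnectedComponent, IsBig T c → (Z ∩ c.supp).Nontrivial)
    (hdeg : ∃ l, (T.neighborSet l).Subsingleton) (hp : Z.ncard ≤ p + 1) (hm : Nat.card γ ≤ m)
    (v : Fin p ⊕ Fin m) (u : β) : CanHang F T (joinCore p m) v u := by
  obtain ⟨l, hl, hlu⟩ := exists_subsingleton_neighborSet_and_nonempty hdeg
  obtain ⟨D, x₀, Z', hD, hZ', hlt, hv⟩ : ∃ D x₀ Z', IsPendant F T x₀ u D ∧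
      CoversOn F (bigVerts F T \ D) Z' ∧ Z'.ncard < Z.ncard ∧ (v.isLeft ↔ x₀ ∈ Z') := by
    rcases v with v | w
    · simpa using exists_isPendant_mem_cover hT hZ hnt u
    · simpa using exists_isPendant_notMem_cover hT hZ hl (hlu · u)
  obtain ⟨ψ, rfl, hψ⟩ := exists_embedding_isLeft_iff_apply_eq (p := p) (by omega) hm hv
  exact hD.canHang (isCopyOn_joinCore hψ hZ')

variable [Finite β] [Finite γ] [Nonempty β]

theorem exists_isSaturatedBlueprint_of_star (hT : ForcesBig F T) {c : F.ConnectedComponent}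
    (hc : IsBig T c) {z : γ} (hz : z ∈ c.supp) (hcz : CoversOn F c.supp {z}) (r : ℕ) :
    ∃ (n : ℕ) (H : SimpleGraph (Fin n)), n ≡ r [MOD Nat.card β] ∧
      IsSaturatedBlueprint F H T := by
  have hpos : 0 < (bigVerts F T).ncard :=
    (Set.ncard_pos (Set.toFinite _)).2 ⟨z, hc.supp_subset_bigVerts hz⟩
  obtain ⟨p, hp⟩ := Nat.exists_eq_add_one_of_ne_zero hpos.ne'
  obtain ⟨m, hm, hmod⟩ := exists_ge_add_modEq p (Nat.card γ) r (t := Nat.card β) Nat.card_pos.ne'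
  have hrest (c' : F.ConnectedComponent) (hc' : IsBig T c') :
      ∃ ψ, IsCopyOn F (bigVerts F T \ c'.supp) (cliqueCore p m) ψ := by
    obtain ⟨x, hx⟩ := c'.nonempty_supp
    obtain ⟨ψ, hψ⟩ := exists_embedding_isLeft_iff
      (ncard_sdiff_le (hc'.supp_subset_bigVerts hx) hx hp.le) hm
    exact ⟨ψ, isCopyOn_cliqueCore hψ fun a ha _ _ _ => ha⟩
  obtain ⟨n, H, hn, hH⟩ := exists_isSaturatedBlueprint_of_core hT
    (not_isCopyOn_cliqueCore (by omega)) hrest (canHang_cliqueCore hT hc hz hcz hp.le hm)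
  exact ⟨n, H, hn.trans (by simpa using hmod), hH⟩

theorem exists_isSaturatedBlueprint_of_forall_not_star (hT : ForcesBig F T)
    (hdeg : ∃ l, (T.neighborSet l).Subsingleton)
    (hstar : ∀ c : F.ConnectedComponent, IsBig T c → ∀ z ∈ c.supp, ¬ CoversOn F c.supp {z})
    (r : ℕ) :
    ∃ (n : ℕ) (H : SimpleGraph (Fin n)), n ≡ r [MOD Nat.card β] ∧
      IsSaturatedBlueprint F H T := by
  obtain ⟨Z, hZ, hmin⟩ := Set.exists_min_image {Z | CoversOn F (bigVerts F T) Z} Set.ncard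
    (Set.toFinite _) ⟨Set.univ, fun _ _ _ _ _ => Or.inl trivial⟩
  have hnt (c : F.ConnectedComponent) (hc : IsBig T c) : (Z ∩ c.supp).Nontrivial := by
    by_contra h
    obtain ⟨z, hz, hcz⟩ := (hZ.mono hc.supp_subset_bigVerts le_rfl).exists_singleton_of_subsingleton
      (Set.not_nontrivial_iff.1 h) c.nonempty_supp
    exact hstar c hc z hz hcz
  have hpos : 0 < Z.ncard := by
    obtain ⟨c, hc, -⟩ := hT.exists_of_bridge (Classical.arbitrary β) (Classical.arbitrary β)
    exact (Set.ncard_pos (Set.toFinite _)).2 ((hnt c hc).nonempty.mono Set.inter_subset_left)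
  obtain ⟨p, hp⟩ := Nat.exists_eq_add_one_of_ne_zero hpos.ne'
  obtain ⟨m, hm, hmod⟩ := exists_ge_add_modEq p (Nat.card γ) r (t := Nat.card β) Nat.card_pos.ne'
  have hfree (Z' : Set γ) (hZ' : CoversOn F (bigVerts F T) Z') : p < Z'.ncard := by
    have := hmin Z' hZ'
    omega
  have hrest (c : F.ConnectedComponent) (hc : IsBig T c) :
      ∃ ψ, IsCopyOn F (bigVerts F T \ c.supp) (joinCore p m) ψ := by
    obtain ⟨z, hzZ, hzc⟩ := (hnt c hc).nonempty
    obtain ⟨ψ, hψ⟩ := exists_embedding_isLeft_iff (ncard_sdiff_le hzZ hzc hp.le) hm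
    exact ⟨ψ, isCopyOn_joinCore hψ (hZ.sdiff c.supp)⟩
  obtain ⟨n, H, hn, hH⟩ := exists_isSaturatedBlueprint_of_core hT
    (not_isCopyOn_joinCore hfree) hrest (canHang_joinCore hT hZ hnt hdeg hp.le hm)
  exact ⟨n, H, hn.trans (by simpa using hmod), hH⟩

end Constructions

lemma GoodTree.forcesBig {n t : ℕ} {F : SimpleGraph (Fin n)} {T : SimpleGraph (Fin t)}
    (hT : GoodTree F t T) : ForcesBig F T :=
  ⟨hT.2.1, disjUnionG_eq_sum T T ▸ hT.2.2⟩

theorem stmt13_general {β γ : Type*} [Finite β] [Finite γ] {F : SimpleGraph γ}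
    {T : SimpleGraph β} (hT : ForcesBig F T)
    (hdeg : ∃ l, (T.neighborSet l).Subsingleton) (r : ℕ) :
    ∃ (n : ℕ) (H : SimpleGraph (Fin n)), n ≡ r [MOD Nat.card β] ∧
      IsSaturatedBlueprint F H T := by
  have : Nonempty β := hdeg.nonempty
  by_cases hstar : ∃ c : F.ConnectedComponent, IsBig T c ∧ ∃ z ∈ c.supp, CoversOn F c.supp {z}
  · obtain ⟨c, hc, z, hz, hcz⟩ := hstar
    exact exists_isSaturatedBlueprint_of_star hT hc hz hcz r
  · push Not at hstar
    exact exists_isSaturatedBlueprint_of_forall_not_star hT hdeg hstar r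

/-- Key lemma: if every `T+e` and every `2T+e` contains a connected component of `F` not
contained in `T`, then every residue class `C` modulo `|T|` contains `|V(H)|` for some
`F`-saturated blueprint `(H,T)`. -/
theorem stmt13 {nF t : ℕ} (F : SimpleGraph (Fin nF)) (hF : 1 ≤ Nat.card F.edgeSet)
    (T : SimpleGraph (Fin t)) (hT : GoodTree F t T) :
    ∀ c : ℕ, c < t → ∃ (nH : ℕ) (H : SimpleGraph (Fin nH)), nH % t = c ∧
      ∃ K : ℕ, ∀ k : ℕ, K ≤ k → SatSingle F (unionCopies H k T) := by
  intro c hc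
  obtain ⟨n, H, hn, hH⟩ :=
    stmt13_general hT.forcesBig (exists_subsingleton_neighborSet_of_isTree hT.1) c
  exact ⟨n, H, by rwa [Nat.card_fin, Nat.ModEq, Nat.mod_eq_of_lt hc] at hn, hH⟩
end

section
/- Let 𝓕 be a non-empty quasi-finite family of finite graphs, each having at least one edge. Then for every tree T there is a constant C_T ≥ 0 such that for every finite graph H, either H ∪ kT is 𝓕-saturated for every integer k ≥ C_T, or H ∪ kT is not 𝓕-saturated for any integer k ≥ C_T. -/
open SimpleGraph Filter Topology

/-- A family of finite graphs, each given on a vertex set `Fin n`. -/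
abbrev GraphFam := Set ((n : ℕ) × SimpleGraph (Fin n))

/-- `G` is `𝓕`-saturated: `G` contains no member of `𝓕`, but adding any missing edge to `G`
creates a member of `𝓕`. -/
def FamSaturated (𝓕 : GraphFam) {α : Type*} (G : SimpleGraph α) : Prop :=
  (∀ F ∈ 𝓕, ¬ Contains G F.2) ∧
    ∀ u v : α, u ≠ v → ¬ G.Adj u v →
      ∃ F ∈ 𝓕, Contains (G ⊔ SimpleGraph.fromEdgeSet {s(u, v)}) F.2

/-- `sat n 𝓕` is the minimum number of edges in an `𝓕`-saturated graph on `n` vertices. -/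
noncomputable def sat (n : ℕ) (𝓕 : GraphFam) : ℕ :=
  sInf {m | ∃ G : SimpleGraph (Fin n), FamSaturated 𝓕 G ∧ Nat.card G.edgeSet = m}

/-- `𝓕` is quasi-finite: for every tree `T` there is a constant `C` such that every graph in `𝓕`
has at most `C` connected components isomorphic to `T`. -/
def QuasiFinite (𝓕 : GraphFam) : Prop :=
  ∀ (t : ℕ) (T : SimpleGraph (Fin t)), T.IsTree →
    ∃ C : ℕ, ∀ F ∈ 𝓕,
      Nat.card {c : F.2.ConnectedComponent // Nonempty (SimpleGraph.induce c.supp F.2 ≃g T)} ≤ C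

/-- `C` is a residue class modulo `r`, viewed as a subset of the non-negative integers. -/
def ResidueClass (r : ℕ) (C : Set ℕ) : Prop := ∃ c < r, C = {n : ℕ | n % r = c}

/-!
A copy of `T` in `H ∪ kT` that meets a subgraph `F` and contains no endpoint of an added edge
contains a whole component of `F`. This component is isomorphic to one of the finitely many
subtrees of `T`, so by quasi-finiteness some `D` bounds the number of such components over all
`F ∈ 𝓕`. An embedding of `F` into `H ∪ (k+1)T` plus one edge thus misses one of the at least `k - 1`
copies of `T` avoiding that edge as soon as `k ≥ D + 2`. By symmetry the missed copy may be taken to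
be any prescribed copy avoiding the edge, and this copy can then be deleted. Hence `H ∪ (k+1)T` and
`H ∪ kT` are saturated simultaneously.
-/

section Containment

variable {V W : Type*} {F : SimpleGraph V} {G : SimpleGraph W}

lemma contains_iff_isContained : Contains G F ↔ F ⊑ G :=
  ⟨fun ⟨f, hf⟩ => ⟨⟨f, fun h => hf _ _ h⟩, f.injective⟩,
    fun ⟨f⟩ => ⟨f.toEmbedding, fun _ _ h => f.toHom.map_adj h⟩⟩

lemma famSaturated_iff_isContained {𝓕 : GraphFam} :
    FamSaturated 𝓕 G ↔ (∀ F ∈ 𝓕, ¬ F.2 ⊑ G) ∧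
      ∀ u v, u ≠ v → ¬ G.Adj u v → ∃ F ∈ 𝓕, F.2 ⊑ G ⊔ edge u v := by
  simp only [FamSaturated, contains_iff_isContained, edge]

lemma isContained_comap_of_range_subset {W' : Type*} (f : Copy F G) (φ : W' ↪ W)
    (hf : Set.range f ⊆ Set.range φ) : F ⊑ G.comap φ := by
  choose g hg using fun v => hf ⟨v, rfl⟩
  have hinj : Function.Injective g := fun v w hvw => f.injective (by simp [← hg, hvw])
  refine ⟨⟨⟨g, fun {v w} h => ?_⟩, hinj⟩⟩
  simpa only [comap_adj, hg, Copy.toHom_apply] using f.toHom.map_adj h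

lemma comap_sup_of_embedding (φ : F ↪g G) (E : SimpleGraph W) :
    (G ⊔ E).comap φ = F ⊔ E.comap φ := by
  ext
  simp

end Containment

section Components

variable {V β : Type*}

/-- The number of connected components of `F` that are isomorphic to a subgraph of `T`. This is the
quantity bounding how many copies of `T` in `H ∪ kT` a copy of `F` can need. -/
noncomputable def numComponentsIn (F : SimpleGraph V) (T : SimpleGraph β) : ℕ :=
  {c : F.ConnectedComponent | c.toSimpleGraph ⊑ T}.ncard

lemma QuasiFinite.exists_ncard_iso_le [Finite β] {𝓕 : GraphFam} (h : QuasiFinite 𝓕)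
    {T : SimpleGraph β} (hT : T.IsTree) :
    ∃ C : ℕ, ∀ F ∈ 𝓕,
      {c : F.2.ConnectedComponent | Nonempty (c.toSimpleGraph ≃g T)}.ncard ≤ C := by
  have := Fintype.ofFinite β
  let e := T.overFinIso rfl
  obtain ⟨C, hC⟩ := h _ _ (e.isTree_iff.1 hT)
  refine ⟨C, fun F hF => (Set.ncard_le_ncard fun c hc => ?_).trans (hC F hF)⟩
  exact hc.map fun e' => e'.trans e

lemma QuasiFinite.exists_numComponentsIn_le [Finite β] {𝓕 : GraphFam} (h : QuasiFinite 𝓕)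
    {T : SimpleGraph β} (hT : T.IsAcyclic) :
    ∃ D : ℕ, ∀ F ∈ 𝓕, numComponentsIn F.2 T ≤ D := by
  have := Fintype.ofFinite {T' : T.Subgraph // T'.coe.IsTree}
  choose C hC using fun T' : {T' : T.Subgraph // T'.coe.IsTree} => h.exists_ncard_iso_le T'.2
  refine ⟨∑ T', C T', fun F hF => ?_⟩
  have hsub : {c : F.2.ConnectedComponent | c.toSimpleGraph ⊑ T} ⊆
      ⋃ T' : {T' : T.Subgraph // T'.coe.IsTree}, {c | Nonempty (c.toSimpleGraph ≃g T'.1.coe)} := by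
    intro c hc
    obtain ⟨T', ⟨e⟩⟩ := isContained_iff_exists_iso_subgraph.1 hc
    have htree : T'.coe.IsTree := ⟨e.connected_iff.1 c.connected_toSimpleGraph,
      hT.comap T'.hom Subgraph.hom_injective⟩
    exact Set.mem_iUnion.2 ⟨⟨T', htree⟩, ⟨e⟩⟩
  calc numComponentsIn F.2 T
      ≤ (⋃ T' : {T' : T.Subgraph // T'.coe.IsTree},
          {c : F.2.ConnectedComponent | Nonempty (c.toSimpleGraph ≃g T'.1.coe)}).ncard :=
        Set.ncard_le_ncard hsub
    _ ≤ ∑ T', _ := Set.ncard_iUnion_le_of_fintype _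
    _ ≤ ∑ T', C T' := Finset.sum_le_sum fun T' _ => hC T' F hF

end Components

section UnionCopies

variable {α β : Type*} {H : SimpleGraph α} {T : SimpleGraph β} {k l : ℕ}

@[simp] lemma unionCopies_adj_inl_inl {a b : α} :
    (unionCopies H k T).Adj (Sum.inl a) (Sum.inl b) ↔ H.Adj a b := by
  simpa [unionCopies, H.adj_comm b a] using Adj.ne

@[simp] lemma unionCopies_adj_inr_inr {x y : Fin k × β} :
    (unionCopies H k T).Adj (Sum.inr x) (Sum.inr y) ↔ x.1 = y.1 ∧ T.Adj x.2 y.2 := by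
  suffices x.1 = y.1 → T.Adj x.2 y.2 → x ≠ y by
    simpa [unionCopies, T.adj_comm y.2, eq_comm (a := y.1)] using this
  exact fun _ h hxy => h.ne (congrArg Prod.snd hxy)

@[simp] lemma not_unionCopies_adj_inl_inr {a : α} {y : Fin k × β} :
    ¬ (unionCopies H k T).Adj (Sum.inl a) (Sum.inr y) := by
  simp [unionCopies]

@[simp] lemma not_unionCopies_adj_inr_inl {a : α} {y : Fin k × β} :
    ¬ (unionCopies H k T).Adj (Sum.inr y) (Sum.inl a) := by
  simp [unionCopies]

/-- The index of the copy of `T` in which a vertex of `H ∪ kT` lies, or `none` for the vertices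
of `H`. -/
def copyIndex : α ⊕ Fin k × β → Option (Fin k) :=
  Sum.elim (fun _ => none) (fun x => some x.1)

@[simp] lemma copyIndex_inl (a : α) : copyIndex (Sum.inl a : α ⊕ Fin k × β) = none := rfl

@[simp] lemma copyIndex_inr (x : Fin k × β) :
    copyIndex (Sum.inr x : α ⊕ Fin k × β) = some x.1 := rfl

lemma copyIndex_eq_of_adj {x y : α ⊕ Fin k × β} (h : (unionCopies H k T).Adj x y) :
    copyIndex x = copyIndex y := by
  cases x <;> cases y <;> simp_all

variable (H T) in
/-- The embedding of `H ∪ kT` into `H ∪ lT` that is the identity on `H` and sends the `i`-th copy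
of `T` to the `g i`-th one. -/
def unionCopiesMap (g : Fin k ↪ Fin l) : unionCopies H k T ↪g unionCopies H l T where
  toEmbedding := (Function.Embedding.refl α).sumMap (g.prodMap (Function.Embedding.refl β))
  map_rel_iff' {x y} := by cases x <;> cases y <;> simp

@[simp] lemma unionCopiesMap_inl (g : Fin k ↪ Fin l) (a : α) :
    unionCopiesMap H T g (Sum.inl a) = Sum.inl a := rfl

@[simp] lemma unionCopiesMap_inr (g : Fin k ↪ Fin l) (x : Fin k × β) :
    unionCopiesMap H T g (Sum.inr x) = Sum.inr (g x.1, x.2) := rfl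

lemma copyIndex_unionCopiesMap (g : Fin k ↪ Fin l) (x : α ⊕ Fin k × β) :
    copyIndex (unionCopiesMap H T g x) = (copyIndex x).map g := by
  cases x <;> rfl

lemma unionCopiesMap_eq_self {g : Fin k ↪ Fin k} {x : α ⊕ Fin k × β}
    (h : ∀ i ∈ copyIndex x, g i = i) : unionCopiesMap H T g x = x := by
  cases x <;> simp_all

variable (H T) in
/-- The embedding of `T` into `H ∪ kT` as the `i`-th copy. -/
def copyEmbedding (i : Fin k) : T ↪g unionCopies H k T where
  toEmbedding := (Function.Embedding.sectR i β).trans Function.Embedding.inr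
  map_rel_iff' := by simp

lemma mem_range_copyEmbedding {i : Fin k} {x : α ⊕ Fin k × β} :
    x ∈ Set.range (copyEmbedding H T i) ↔ copyIndex x = some i := by
  rcases x with a | ⟨j, b⟩ <;> simp [copyEmbedding, eq_comm]

/-- The indices of the copies of `T` in `H ∪ kT` that are disjoint from the vertex set `A`. -/
def copiesAvoiding (A : Set (α ⊕ Fin k × β)) : Set (Fin k) :=
  {i | ∀ x ∈ A, copyIndex x ≠ some i}

lemma copiesAvoiding_antitone :
    Antitone (copiesAvoiding : Set (α ⊕ Fin k × β) → Set (Fin k)) :=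
  fun _ _ hAB _ hi x hx => hi x (hAB hx)

lemma subset_range_unionCopiesMap_succAboveEmb_iff {j : Fin (k + 1)}
    {A : Set (α ⊕ Fin (k + 1) × β)} :
    A ⊆ Set.range (unionCopiesMap H T j.succAboveEmb) ↔ j ∈ copiesAvoiding A := by
  refine forall₂_congr fun x _ => ?_
  rcases x with a | ⟨i, b⟩
  · simp
  · simp [← Fin.exists_succAbove_eq_iff]

lemma le_ncard_copiesAvoiding_add_card (A : Finset (α ⊕ Fin k × β)) :
    k ≤ (copiesAvoiding (A : Set (α ⊕ Fin k × β))).ncard + A.card := by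
  set S := copiesAvoiding (A : Set (α ⊕ Fin k × β))
  have hsub : some '' Sᶜ ⊆ copyIndex '' (A : Set (α ⊕ Fin k × β)) := by
    rintro _ ⟨i, hi, rfl⟩
    simpa [S, copiesAvoiding] using hi
  have hmeet : Sᶜ.ncard ≤ A.card :=
    calc Sᶜ.ncard = (some '' Sᶜ).ncard :=
          (Set.ncard_image_of_injective _ (Option.some_injective _)).symm
      _ ≤ (copyIndex '' (A : Set (α ⊕ Fin k × β))).ncard := Set.ncard_le_ncard hsub
      _ ≤ (A : Set (α ⊕ Fin k × β)).ncard := Set.ncard_image_le A.finite_toSet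
      _ = A.card := Set.ncard_coe_finset A
  have hsplit : S.ncard + Sᶜ.ncard = k := by rw [Set.ncard_add_ncard_compl, Nat.card_fin]
  omega

lemma copiesAvoiding_nonempty {A : Finset (α ⊕ Fin k × β)} (hA : A.card < k) :
    (copiesAvoiding (A : Set (α ⊕ Fin k × β))).Nonempty := by
  have := le_ncard_copiesAvoiding_add_card A
  exact Set.nonempty_of_ncard_ne_zero (by omega)

end UnionCopies

section DeleteCopy

variable {α β V : Type*} {H : SimpleGraph α} {T : SimpleGraph β} {F : SimpleGraph V} {k : ℕ}
  {E : SimpleGraph (α ⊕ Fin k × β)} {i j : Fin k}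

lemma copyIndex_eq_some_of_adj (hi : i ∈ copiesAvoiding E.support) {x y : α ⊕ Fin k × β}
    (hxy : (unionCopies H k T ⊔ E).Adj x y) (hx : copyIndex x = some i) : copyIndex y = some i := by
  rcases hxy with hxy | hxy
  · exact copyIndex_eq_of_adj hxy ▸ hx
  · exact absurd hx (hi x ⟨y, hxy⟩)

lemma copyIndex_eq_some_of_reachable (hi : i ∈ copiesAvoiding E.support)
    (f : F →g unionCopies H k T ⊔ E) {v w : V} (hvw : F.Reachable v w)
    (hv : copyIndex (f v) = some i) : copyIndex (f w) = some i := by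
  obtain ⟨p⟩ := hvw
  induction p with
  | nil => exact hv
  | cons hadj _ ih => exact ih (copyIndex_eq_some_of_adj hi (f.map_adj hadj) hv)

lemma comap_copyEmbedding_sup (hi : i ∈ copiesAvoiding E.support) :
    (unionCopies H k T ⊔ E).comap (copyEmbedding H T i) = T := by
  rw [comap_sup_of_embedding, sup_eq_left]
  exact fun a b hab => absurd (mem_range_copyEmbedding.1 ⟨a, rfl⟩) (hi _ ⟨_, hab⟩)

lemma toSimpleGraph_isContained_of_copyIndex_eq (hi : i ∈ copiesAvoiding E.support)
    (f : Copy F (unionCopies H k T ⊔ E)) {v : V} (hv : copyIndex (f v) = some i) :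
    (F.connectedComponentMk v).toSimpleGraph ⊑ T := by
  rw [← comap_copyEmbedding_sup (H := H) (T := T) hi]
  refine isContained_comap_of_range_subset (f.comp (Copy.induce F _))
    (copyEmbedding H T i).toEmbedding ?_
  rintro _ ⟨w, rfl⟩
  exact mem_range_copyEmbedding.2 <|
    copyIndex_eq_some_of_reachable hi f.toHom (ConnectedComponent.exact w.2).symm hv

lemma exists_mem_copiesAvoiding_range [Finite V] {A : Finset (α ⊕ Fin k × β)}
    (hE : E.support ⊆ A) (hA : numComponentsIn F T + A.card < k)
    (f : Copy F (unionCopies H k T ⊔ E)) :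
    ∃ i ∈ copiesAvoiding (A : Set (α ⊕ Fin k × β)), i ∈ copiesAvoiding (Set.range f) := by
  by_contra! hnone
  have hmeet (i : copiesAvoiding (A : Set (α ⊕ Fin k × β))) : ∃ v, copyIndex (f v) = some i.1 := by
    simpa [copiesAvoiding] using hnone i i.2
  choose v hv using hmeet
  have havoid (i : copiesAvoiding (A : Set (α ⊕ Fin k × β))) : i.1 ∈ copiesAvoiding E.support :=
    copiesAvoiding_antitone hE i.2
  have hcard : (copiesAvoiding (A : Set (α ⊕ Fin k × β))).ncard ≤ numComponentsIn F T := by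
    refine Nat.card_le_card_of_injective (fun i => ⟨F.connectedComponentMk (v i),
      toSimpleGraph_isContained_of_copyIndex_eq (havoid i) f (hv i)⟩) fun i j hij => ?_
    have hreach : F.Reachable (v i) (v j) := ConnectedComponent.exact (congrArg Subtype.val hij)
    have hvj := copyIndex_eq_some_of_reachable (havoid i) f.toHom hreach (hv i)
    exact Subtype.ext (Option.some_injective _ (hvj.symm.trans (hv j)))
  have := le_ncard_copiesAvoiding_add_card A
  omega

lemma exists_copy_mem_copiesAvoiding_range (hi : i ∈ copiesAvoiding E.support)
    (hj : j ∈ copiesAvoiding E.support) (f : Copy F (unionCopies H k T ⊔ E))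
    (hf : i ∈ copiesAvoiding (Set.range f)) :
    ∃ f' : Copy F (unionCopies H k T ⊔ E), j ∈ copiesAvoiding (Set.range f') := by
  let σ := unionCopiesMap H T (Equiv.swap i j).toEmbedding
  have hσ {x} (hx : x ∈ E.support) : σ x = x := unionCopiesMap_eq_self fun m hm =>
    Equiv.swap_apply_of_ne_of_ne (fun h => hi x hx (h ▸ hm)) fun h => hj x hx (h ▸ hm)
  -- `E` meets neither copy, so exchanging the two leaves it unchanged.
  let σ' : unionCopies H k T ⊔ E →g unionCopies H k T ⊔ E := ⟨σ, fun {x y} hxy => hxy.imp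
    σ.map_adj_iff.2 fun h => by rwa [hσ ⟨y, h⟩, hσ ⟨x, h.symm⟩]⟩
  refine ⟨(σ'.toCopy σ.injective).comp f, ?_⟩
  rintro _ ⟨v, rfl⟩ hv
  have hswap : (copyIndex (f v)).map (Equiv.swap i j) = some j :=
    (copyIndex_unionCopiesMap (H := H) (T := T) _ _).symm.trans hv
  obtain ⟨m, hm, hmj⟩ := Option.map_eq_some_iff.1 hswap
  have hmi : m = i := (Equiv.swap_apply_eq_iff.1 hmj).trans (Equiv.swap_apply_right i j)
  exact hf _ ⟨v, rfl⟩ (hmi ▸ hm)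

lemma isContained_unionCopies_succ_sup_iff [Finite V] {j : Fin (k + 1)}
    {E : SimpleGraph (α ⊕ Fin (k + 1) × β)} {A : Finset (α ⊕ Fin (k + 1) × β)}
    (hE : E.support ⊆ A) (hj : j ∈ copiesAvoiding (A : Set (α ⊕ Fin (k + 1) × β)))
    (hA : numComponentsIn F T + A.card ≤ k) :
    F ⊑ unionCopies H (k + 1) T ⊔ E ↔
      F ⊑ unionCopies H k T ⊔ E.comap (unionCopiesMap H T j.succAboveEmb) := by
  rw [← comap_sup_of_embedding]
  let φ := (unionCopiesMap H T j.succAboveEmb).toEmbedding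
  refine ⟨fun ⟨f⟩ => ?_, fun h => h.trans (Embedding.comap φ _).isContained⟩
  obtain ⟨i, hi, hfi⟩ := exists_mem_copiesAvoiding_range hE (Nat.lt_succ_of_le hA) f
  obtain ⟨f', hf'⟩ := exists_copy_mem_copiesAvoiding_range (copiesAvoiding_antitone hE hi)
    (copiesAvoiding_antitone hE hj) f hfi
  exact isContained_comap_of_range_subset f' φ
    (subset_range_unionCopiesMap_succAboveEmb_iff.2 hf')

lemma isContained_unionCopies_succ_iff [Finite V] (hk : numComponentsIn F T ≤ k) :
    F ⊑ unionCopies H (k + 1) T ↔ F ⊑ unionCopies H k T := by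
  simpa using isContained_unionCopies_succ_sup_iff (H := H) (j := Fin.last k) (E := ⊥) (A := ∅)
    (by simp) (by simp [copiesAvoiding]) (by simpa using hk)

lemma isContained_unionCopies_succ_sup_edge_iff [Finite V] (hk : numComponentsIn F T + 2 ≤ k)
    (j : Fin (k + 1)) (u v : α ⊕ Fin k × β) :
    F ⊑ unionCopies H (k + 1) T ⊔ edge (unionCopiesMap H T j.succAboveEmb u)
        (unionCopiesMap H T j.succAboveEmb v) ↔
      F ⊑ unionCopies H k T ⊔ edge u v := by
  classical
  set φ := unionCopiesMap H T j.succAboveEmb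
  let A : Finset (α ⊕ Fin (k + 1) × β) := {φ u, φ v}
  have hsupport : (edge (φ u) (φ v)).support ⊆ A := by
    intro x hx
    obtain ⟨y, hxy⟩ := (mem_support _).1 hx
    rw [edge_adj] at hxy
    simp only [A, Finset.coe_pair, Set.mem_insert_iff, Set.mem_singleton_iff]
    tauto
  have hrange : (A : Set (α ⊕ Fin (k + 1) × β)) ⊆ Set.range φ := by
    simp [A, Set.insert_subset_iff]
  have hcomap : (edge (φ u) (φ v)).comap φ = edge u v := by
    ext
    simp [edge_adj]
  rw [isContained_unionCopies_succ_sup_iff hsupport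
    (subset_range_unionCopiesMap_succAboveEmb_iff.1 hrange)
    ((Nat.add_le_add_left Finset.card_le_two _).trans hk), hcomap]

end DeleteCopy

section Saturation

variable {α β : Type*} {H : SimpleGraph α} {T : SimpleGraph β} {𝓕 : GraphFam} {D k : ℕ}

lemma exists_unionCopiesMap_succAboveEmb_eq (hk : 2 ≤ k) (u v : α ⊕ Fin (k + 1) × β) :
    ∃ (j : Fin (k + 1)) (u' v' : α ⊕ Fin k × β),
      unionCopiesMap H T j.succAboveEmb u' = u ∧ unionCopiesMap H T j.succAboveEmb v' = v := by
  classical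
  obtain ⟨j, hj⟩ := copiesAvoiding_nonempty (A := {u, v})
    (Finset.card_le_two.trans_lt (Nat.lt_succ_of_le hk))
  have hrange := subset_range_unionCopiesMap_succAboveEmb_iff (H := H) (T := T).2 hj
  obtain ⟨u', hu⟩ := hrange (show u ∈ _ by simp)
  obtain ⟨v', hv⟩ := hrange (show v ∈ _ by simp)
  exact ⟨j, u', v', hu, hv⟩

lemma famSaturated_unionCopies_succ_iff (hD : ∀ F ∈ 𝓕, numComponentsIn F.2 T ≤ D)
    (hk : D + 2 ≤ k) :
    FamSaturated 𝓕 (unionCopies H (k + 1) T) ↔ FamSaturated 𝓕 (unionCopies H k T) := by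
  have hbound {F} (hF : F ∈ 𝓕) : numComponentsIn F.2 T + 2 ≤ k :=
    (Nat.add_le_add_right (hD F hF) 2).trans hk
  simp only [famSaturated_iff_isContained]
  refine and_congr (forall₂_congr fun F hF => not_congr <| isContained_unionCopies_succ_iff <|
    (Nat.le_add_right _ 2).trans (hbound hF)) ⟨fun h u v huv hadj => ?_, fun h u v huv hadj => ?_⟩
  · let φ := unionCopiesMap H T (Fin.last k).succAboveEmb
    obtain ⟨F, hF, hFc⟩ := h (φ u) (φ v) (φ.injective.ne huv) (mt φ.map_adj_iff.1 hadj)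
    exact ⟨F, hF, (isContained_unionCopies_succ_sup_edge_iff (hbound hF) _ u v).1 hFc⟩
  · obtain ⟨j, u, v, rfl, rfl⟩ :=
      exists_unionCopiesMap_succAboveEmb_eq (H := H) (T := T) ((Nat.le_add_left 2 D).trans hk) u v
    obtain ⟨F, hF, hFc⟩ := h u v (ne_of_apply_ne _ huv) (mt (Embedding.map_adj_iff _).2 hadj)
    exact ⟨F, hF, (isContained_unionCopies_succ_sup_edge_iff (hbound hF) j u v).2 hFc⟩

lemma famSaturated_unionCopies_iff (hD : ∀ F ∈ 𝓕, numComponentsIn F.2 T ≤ D) (hk : D + 2 ≤ k) :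
    FamSaturated 𝓕 (unionCopies H k T) ↔ FamSaturated 𝓕 (unionCopies H (D + 2) T) := by
  induction k, hk using Nat.le_induction with
  | base => rfl
  | succ k hk ih => exact (famSaturated_unionCopies_succ_iff hD hk).trans ih

end Saturation

theorem stmt16_general {𝓕 : GraphFam} (h𝓕 : QuasiFinite 𝓕) {β : Type*} [Finite β]
    {T : SimpleGraph β} (hT : T.IsAcyclic) :
    ∃ C : ℕ, ∀ {α : Type*} (H : SimpleGraph α),
      (∀ k : ℕ, C ≤ k → FamSaturated 𝓕 (unionCopies H k T)) ∨
      (∀ k : ℕ, C ≤ k → ¬ FamSaturated 𝓕 (unionCopies H k T)) := by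
  obtain ⟨D, hD⟩ := h𝓕.exists_numComponentsIn_le hT
  refine ⟨D + 2, fun H => ?_⟩
  by_cases h : FamSaturated 𝓕 (unionCopies H (D + 2) T)
  · exact Or.inl fun k hk => (famSaturated_unionCopies_iff hD hk).2 h
  · exact Or.inr fun k hk => mt (famSaturated_unionCopies_iff hD hk).1 h

/-- For a quasi-finite family `𝓕` and every tree `T` there is a threshold `C_T` such that for
every graph `H`, either `H ∪ kT` is `𝓕`-saturated for all `k ≥ C_T`, or for no `k ≥ C_T`. -/
theorem stmt16 (𝓕 : GraphFam) (h1 : 𝓕.Nonempty) (h2 : ∀ F ∈ 𝓕, 1 ≤ Nat.card F.2.edgeSet)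
    (h3 : QuasiFinite 𝓕) :
    ∀ (t : ℕ) (T : SimpleGraph (Fin t)), T.IsTree →
      ∃ C : ℕ, ∀ (nH : ℕ) (H : SimpleGraph (Fin nH)),
        (∀ k : ℕ, C ≤ k → FamSaturated 𝓕 (unionCopies H k T)) ∨
        (∀ k : ℕ, C ≤ k → ¬ FamSaturated 𝓕 (unionCopies H k T)) := by
  intro t T hT
  obtain ⟨C, hC⟩ := stmt16_general h3 hT.isAcyclic
  exact ⟨C, fun _ H => hC H⟩
end
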